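/- arXiv:2103.12684 — 4 statements merged into one kernel-verified Lean document; each statement's English description precedes it below -/
import Mathlib

section
/- Let μ be a compactly supported probability measure on ℝ^d. Then the function y ↦ H(μ * n_y) from (0, ∞) to ℝ: (1) is monotonically increasing; (2) has both one-sided derivatives (left-hand and right-hand) at every point of (0, ∞); (3) is continuous; and (4) both one-sided derivatives are decreasing functions of y. -/
open MeasureTheory Real

/-- Density of the centered Gaussian on `ℝ^d` with covariance matrix `y • I`. -/
noncomputable def gaussD (d : ℕ) (y : ℝ) (x : EuclideanSpace ℝ (Fin d)) : ℝ :=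
  (2 * Real.pi * y) ^ (-(d : ℝ) / 2) * Real.exp (-‖x‖ ^ 2 / (2 * y))

/-- The differential entropy `H(μ * n_y) = ∫ -f log f` where `f` is the density of `μ * n_y`. -/
noncomputable def entG (d : ℕ) (μ : Measure (EuclideanSpace ℝ (Fin d))) (y : ℝ) : ℝ :=
  ∫ x, Real.negMulLog (∫ z, gaussD d y (x - z) ∂μ)

/-!
Convolving with `n_s` adds an independent Gaussian vector of covariance `s • I`, and these Gaussians
form a convolution semigroup. The Gibbs inequality, in the form `0 ≤ 𝔼 L` as soon as
`𝔼 exp (-L) ≤ 1`, is applied to independent `A`, `B`, `X`, with `p_Y` denoting the density of `Y`: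

* `L = log (p_X (X) / p_{A+X} (A+X))` yields `H(X) ≤ H(A+X)`;
* `L = log (p_X (X) p_{A+B+X} (A+B+X) / (p_{A+X} (A+X) p_{B+X} (B+X)))` yields the submodularity
  `H(A+B+X) + H(X) ≤ H(A+X) + H(B+X)`.

For Gaussian `A` and `B` the first inequality says that the entropy increases along the heat flow,
and the second that its increment over a time step `δ` decreases. A monotone function with
decreasing increments is concave, which gives continuity and the one-sided derivatives. The
logarithms are integrable because the density of `μ * n_y` is bounded above and is bounded below by
a positive multiple of `exp (-‖x‖² / y)`, while `μ * n_y` has a finite second moment.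
-/

open Set Filter ENNReal ProbabilityTheory
open scoped RealInnerProductSpace

section DecreasingIncrements

variable {S : Set ℝ} {φ : ℝ → ℝ} {x y z δ : ℝ} {n : ℕ}

lemma sub_le_mul_increment [S.OrdConnected]
    (hφ : AntitoneOn (fun u ↦ φ (u + δ) - φ u) {u ∈ S | u + δ ∈ S}) (hδ : 0 ≤ δ)
    (hx : x ∈ S) (hxn : x + n * δ ∈ S) :
    φ (x + n * δ) - φ x ≤ n * (φ (x + δ) - φ x) := by
  have hmem (i : ℕ) (hi : i ≤ n) : x + i * δ ∈ S :=
    OrdConnected.out ‹_› hx hxn ⟨by linarith [mul_nonneg i.cast_nonneg hδ], by gcongr⟩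
  have hstep (i : ℕ) (hi : i ∈ Finset.range n) :
      φ (x + (i + 1 : ℕ) * δ) - φ (x + i * δ) ≤ φ (x + δ) - φ x := by
    have hin : i < n := Finset.mem_range.1 hi
    have hsucc : x + (i + 1 : ℕ) * δ = x + i * δ + δ := by push_cast; ring
    rw [hsucc]
    refine hφ ⟨hx, ?_⟩ ⟨hmem i hin.le, hsucc ▸ hmem (i + 1) hin⟩ ?_
    · simpa using hmem 1 (by omega)
    · linarith [mul_nonneg i.cast_nonneg hδ]
  have hsum := Finset.sum_le_card_nsmul _ _ _ hstep
  rw [Finset.sum_range_sub (fun i : ℕ ↦ φ (x + i * δ))] at hsum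
  simpa using hsum

lemma mul_increment_le_sub [S.OrdConnected]
    (hφ : AntitoneOn (fun u ↦ φ (u + δ) - φ u) {u ∈ S | u + δ ∈ S}) (hδ : 0 ≤ δ)
    (hx : x ∈ S) (hxn : x + n * δ + δ ∈ S) :
    n * (φ (x + n * δ + δ) - φ (x + n * δ)) ≤ φ (x + n * δ) - φ x := by
  have hmem (i : ℕ) (hi : i ≤ n + 1) : x + i * δ ∈ S := by
    refine OrdConnected.out ‹_› hx hxn ⟨by linarith [mul_nonneg i.cast_nonneg hδ], ?_⟩
    calc x + i * δ ≤ x + (n + 1 : ℕ) * δ := by gcongr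
      _ = x + n * δ + δ := by push_cast; ring
  have hstep (i : ℕ) (hi : i ∈ Finset.range n) :
      φ (x + n * δ + δ) - φ (x + n * δ) ≤ φ (x + (i + 1 : ℕ) * δ) - φ (x + i * δ) := by
    have hin : i < n := Finset.mem_range.1 hi
    have hsucc : x + (i + 1 : ℕ) * δ = x + i * δ + δ := by push_cast; ring
    rw [hsucc]
    refine hφ ⟨hmem i (by omega), hsucc ▸ hmem (i + 1) (by omega)⟩ ⟨hmem n (by omega), hxn⟩ ?_
    gcongr
  have hsum := Finset.card_nsmul_le_sum _ _ _ hstep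
  rw [Finset.sum_range_sub (fun i : ℕ ↦ φ (x + i * δ))] at hsum
  simpa using hsum

/- The increments are compared along the grid through `y` of step `(z - y) / n`. It need not contain
`x`, and monotonicity of `φ` absorbs the piece left over next to `x`. -/
lemma floor_div_mul_sub_le_sub [S.OrdConnected] (hmono : MonotoneOn φ S)
    (hφ : ∀ δ > 0, AntitoneOn (fun u ↦ φ (u + δ) - φ u) {u ∈ S | u + δ ∈ S})
    (hx : x ∈ S) (hz : z ∈ S) (hxy : x < y) (hyz : y < z) (hn : 0 < n) :
    ⌊(y - x) / (z - y) * n⌋₊ / n * (φ z - φ y) ≤ φ y - φ x := by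
  have hzy : 0 < z - y := sub_pos.2 hyz
  have hy : y ∈ S := OrdConnected.out ‹_› hx hz ⟨hxy.le, hyz.le⟩
  have hn' : (0 : ℝ) < n := Nat.cast_pos.2 hn
  set δ := (z - y) / n with hδ
  set m := ⌊(y - x) / (z - y) * n⌋₊
  have hδ0 : 0 < δ := div_pos hzy hn'
  have hz_eq : y + n * δ = z := by rw [hδ]; field_simp; ring
  have hmδ : m * δ ≤ y - x := calc
    m * δ ≤ (y - x) / (z - y) * n * δ := by
      gcongr
      exact Nat.floor_le (mul_nonneg (div_pos (sub_pos.2 hxy) hzy).le hn'.le)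
    _ = y - x := by rw [hδ]; field_simp
  have hw : y - m * δ ∈ S :=
    OrdConnected.out ‹_› hx hy ⟨by linarith, by linarith [show 0 ≤ m * δ by positivity]⟩
  have hyδ : y + δ ∈ S := OrdConnected.out ‹_› hy hz
    ⟨by linarith, hz_eq ▸ by gcongr; exact le_mul_of_one_le_left hδ0.le (mod_cast hn)⟩
  have hright : φ z - φ y ≤ n * (φ (y + δ) - φ y) := by
    simpa [hz_eq] using sub_le_mul_increment (n := n) (hφ δ hδ0) hδ0.le hy (hz_eq ▸ hz)
  have hleft : m * (φ (y + δ) - φ y) ≤ φ y - φ (y - m * δ) := by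
    simpa using mul_increment_le_sub (n := m) (hφ δ hδ0) hδ0.le hw (by simpa using hyδ)
  calc m / n * (φ z - φ y) ≤ m / n * (n * (φ (y + δ) - φ y)) := by gcongr
    _ = m * (φ (y + δ) - φ y) := by field_simp
    _ ≤ φ y - φ (y - m * δ) := hleft
    _ ≤ φ y - φ x := by gcongr; exact hmono hx hw (by linarith)

theorem concaveOn_of_monotoneOn_of_antitoneOn_increment (hS : Convex ℝ S) (hmono : MonotoneOn φ S)
    (hφ : ∀ δ > 0, AntitoneOn (fun u ↦ φ (u + δ) - φ u) {u ∈ S | u + δ ∈ S}) :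
    ConcaveOn ℝ S φ := by
  have := hS.ordConnected
  refine concaveOn_of_slope_anti_adjacent hS fun {x y z} hx hz hxy hyz ↦ ?_
  have hzy : 0 < z - y := sub_pos.2 hyz
  have hlim : (y - x) / (z - y) * (φ z - φ y) ≤ φ y - φ x :=
    le_of_tendsto (((tendsto_nat_floor_mul_div_atTop (div_pos (sub_pos.2 hxy) hzy).le).comp
      tendsto_natCast_atTop_atTop).mul_const _) ((eventually_gt_atTop 0).mono fun _ hn ↦
        floor_div_mul_sub_le_sub hmono hφ hx hz hxy hyz hn)
  rw [div_mul_eq_mul_div, div_le_iff₀ hzy] at hlim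
  rw [div_le_div_iff₀ hzy (sub_pos.2 hxy)]
  linarith

end DecreasingIncrements

section OneSidedDerivatives

variable {S : Set ℝ} {f : ℝ → ℝ} {x : ℝ}

lemma differentiableWithinAt_Ioi_of_concaveOn (hf : ConcaveOn ℝ S f) (hx : x ∈ interior S) :
    DifferentiableWithinAt ℝ f (Ioi x) x := by
  simpa using (hf.neg.differentiableWithinAt_Ioi_of_mem_interior hx).neg

lemma differentiableWithinAt_Iio_of_concaveOn (hf : ConcaveOn ℝ S f) (hx : x ∈ interior S) :
    DifferentiableWithinAt ℝ f (Iio x) x := by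
  simpa using (hf.neg.differentiableWithinAt_Iio_of_mem_interior hx).neg

lemma antitoneOn_rightDeriv_of_concaveOn (hf : ConcaveOn ℝ S f) :
    AntitoneOn (fun x ↦ derivWithin f (Ioi x) x) (interior S) := by
  simpa [derivWithin.neg] using hf.neg.monotoneOn_rightDeriv.neg

lemma antitoneOn_leftDeriv_of_concaveOn (hf : ConcaveOn ℝ S f) :
    AntitoneOn (fun x ↦ derivWithin f (Iio x) x) (interior S) := by
  simpa [derivWithin.neg] using hf.neg.monotoneOn_leftDeriv.neg

end OneSidedDerivatives

section Gibbs

variable {α : Type*} [MeasurableSpace α] {P m ν : Measure α}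

lemma integral_nonneg_of_lintegral_exp_neg_le_one [IsProbabilityMeasure P] {L : α → ℝ}
    (hL : Integrable L P) (h : ∫⁻ a, ENNReal.ofReal (exp (-L a)) ∂P ≤ 1) : 0 ≤ ∫ a, L a ∂P := by
  have hmeas : AEStronglyMeasurable (fun a ↦ exp (-L a)) P :=
    continuous_exp.comp_aestronglyMeasurable hL.1.neg
  have hexp : Integrable (fun a ↦ exp (-L a)) P :=
    (lintegral_ofReal_ne_top_iff_integrable hmeas (ae_of_all _ fun _ ↦ (exp_pos _).le)).1
      (ne_top_of_le_ne_top one_ne_top h)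
  have hone : ∫ a, exp (-L a) ∂P ≤ 1 := by
    rw [integral_eq_lintegral_of_nonneg_ae (ae_of_all _ fun _ ↦ (exp_pos _).le) hmeas]
    exact toReal_le_of_le_ofReal zero_le_one (by simpa using h)
  calc 0 ≤ ∫ a, (1 - exp (-L a)) ∂P := by
        simpa [integral_sub (integrable_const _) hexp] using hone
    _ ≤ ∫ a, L a ∂P := integral_mono ((integrable_const _).sub hexp) hL fun a ↦ by
        linarith [add_one_le_exp (-L a)]

lemma ofReal_exp_llr [SigmaFinite ν] [ν.HaveLebesgueDecomposition m] (h : ν ≪ m) :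
    (fun x ↦ ENNReal.ofReal (exp (llr ν m x))) =ᵐ[ν] ν.rnDeriv m := by
  filter_upwards [exp_llr_of_ac ν m h, h.ae_le (ν.rnDeriv_lt_top m)] with x hx hfin
  rw [hx, ofReal_toReal hfin.ne]

lemma lintegral_inv_rnDeriv_mul_le [ν.HaveLebesgueDecomposition m] (h : ν ≪ m) {g : α → ℝ≥0∞}
    (hg : Measurable g) : ∫⁻ x, (ν.rnDeriv m x)⁻¹ * g x ∂ν ≤ ∫⁻ x, g x ∂m := by
  rw [← lintegral_rnDeriv_mul h (by fun_prop)]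
  refine lintegral_mono fun x ↦ ?_
  rw [← mul_assoc]
  exact mul_le_of_le_one_left' (ENNReal.mul_inv_le_one _)

/-- The differential entropy `-∫ p log p ∂m` of a measure `ν` with density `p` with respect to the
reference measure `m`, the density being encoded as the Radon-Nikodym derivative. -/
noncomputable def diffEntropy (m ν : Measure α) : ℝ :=
  ∫ x, negMulLog (ν.rnDeriv m x).toReal ∂m

lemma integral_llr_eq_neg_diffEntropy [SigmaFinite ν] [ν.HaveLebesgueDecomposition m]
    (h : ν ≪ m) : ∫ x, llr ν m x ∂ν = -diffEntropy m ν := by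
  simp only [diffEntropy, negMulLog, neg_mul, integral_neg, neg_neg, integral_rnDeriv_mul_log h]

lemma integral_llr_comp_eq_neg_diffEntropy {Ω : Type*} [MeasurableSpace Ω] {M : Measure Ω}
    {T : Ω → α} [SigmaFinite ν] [ν.HaveLebesgueDecomposition m] (h : ν ≪ m)
    (hT : MeasurePreserving T M ν) : ∫ ω, llr ν m (T ω) ∂M = -diffEntropy m ν := by
  rw [← integral_llr_eq_neg_diffEntropy h, ← hT.map_eq, integral_map hT.measurable.aemeasurable
    (measurable_llr _ _).aestronglyMeasurable]

section JointLaw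

variable {Ω : Type*} [MeasurableSpace Ω] {P : Measure Ω} [IsProbabilityMeasure P]
  {X A B C : Ω → α} {νX νA νB νC : Measure α} [SigmaFinite m] [SigmaFinite νX] [SigmaFinite νA]
  [SigmaFinite νB] [SigmaFinite νC]

lemma diffEntropy_le_of_lintegral_rnDeriv_le_one (hX : MeasurePreserving X P νX)
    (hA : MeasurePreserving A P νA) (hXm : νX ≪ m) (hAm : νA ≪ m)
    (hX_int : Integrable (llr νX m) νX) (hA_int : Integrable (llr νA m) νA)
    (h : ∫⁻ ω, (νX.rnDeriv m (X ω))⁻¹ * νA.rnDeriv m (A ω) ∂P ≤ 1) :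
    diffEntropy m νX ≤ diffEntropy m νA := by
  have hX_int' : Integrable (fun ω ↦ llr νX m (X ω)) P := hX.integrable_comp_of_integrable hX_int
  have hA_int' : Integrable (fun ω ↦ llr νA m (A ω)) P := hA.integrable_comp_of_integrable hA_int
  have hgibbs : 0 ≤ ∫ ω, (llr νX m (X ω) - llr νA m (A ω)) ∂P := by
    refine integral_nonneg_of_lintegral_exp_neg_le_one (hX_int'.sub hA_int')
      (le_of_eq_of_le (lintegral_congr_ae ?_) h)
    filter_upwards [hX.quasiMeasurePreserving.ae (ofReal_exp_llr hXm),
      hA.quasiMeasurePreserving.ae (ofReal_exp_llr hAm)] with ω hωX hωA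
    rw [← hωX, ← hωA, ← ofReal_inv_of_pos (exp_pos _), ← ofReal_mul (by positivity), ← exp_neg,
      ← exp_add]
    ring_nf
  rw [integral_sub hX_int' hA_int', integral_llr_comp_eq_neg_diffEntropy hXm hX,
    integral_llr_comp_eq_neg_diffEntropy hAm hA] at hgibbs
  linarith

lemma diffEntropy_add_le_of_lintegral_rnDeriv_le_one (hX : MeasurePreserving X P νX)
    (hA : MeasurePreserving A P νA) (hB : MeasurePreserving B P νB) (hC : MeasurePreserving C P νC)
    (hXm : νX ≪ m) (hAm : νA ≪ m) (hBm : νB ≪ m) (hCm : νC ≪ m)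
    (hX_int : Integrable (llr νX m) νX) (hA_int : Integrable (llr νA m) νA)
    (hB_int : Integrable (llr νB m) νB) (hC_int : Integrable (llr νC m) νC)
    (h : ∫⁻ ω, (νX.rnDeriv m (X ω))⁻¹ * (νA.rnDeriv m (A ω) * νB.rnDeriv m (B ω) *
      (νC.rnDeriv m (C ω))⁻¹) ∂P ≤ 1) :
    diffEntropy m νC + diffEntropy m νX ≤ diffEntropy m νA + diffEntropy m νB := by
  have hX_int' : Integrable (fun ω ↦ llr νX m (X ω)) P := hX.integrable_comp_of_integrable hX_int
  have hA_int' : Integrable (fun ω ↦ llr νA m (A ω)) P := hA.integrable_comp_of_integrable hA_int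
  have hB_int' : Integrable (fun ω ↦ llr νB m (B ω)) P := hB.integrable_comp_of_integrable hB_int
  have hC_int' : Integrable (fun ω ↦ llr νC m (C ω)) P := hC.integrable_comp_of_integrable hC_int
  have hXC_int : Integrable (fun ω ↦ llr νX m (X ω) + llr νC m (C ω)) P := hX_int'.add hC_int'
  have hAB_int : Integrable (fun ω ↦ llr νA m (A ω) + llr νB m (B ω)) P := hA_int'.add hB_int'
  have hgibbs : 0 ≤ ∫ ω, ((llr νX m (X ω) + llr νC m (C ω)) -
      (llr νA m (A ω) + llr νB m (B ω))) ∂P := by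
    refine integral_nonneg_of_lintegral_exp_neg_le_one (hXC_int.sub hAB_int)
      (le_of_eq_of_le (lintegral_congr_ae ?_) h)
    filter_upwards [hX.quasiMeasurePreserving.ae (ofReal_exp_llr hXm),
      hA.quasiMeasurePreserving.ae (ofReal_exp_llr hAm),
      hB.quasiMeasurePreserving.ae (ofReal_exp_llr hBm),
      hC.quasiMeasurePreserving.ae (ofReal_exp_llr hCm)] with ω hωX hωA hωB hωC
    simp only [← hωX, ← hωA, ← hωB, ← hωC, ← ofReal_inv_of_pos (exp_pos _), ← exp_neg,
      ← ofReal_mul (exp_pos _).le, ← exp_add]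
    ring_nf
  rw [integral_sub hXC_int hAB_int, integral_add hX_int' hC_int',
    integral_add hA_int' hB_int', integral_llr_comp_eq_neg_diffEntropy hXm hX,
    integral_llr_comp_eq_neg_diffEntropy hAm hA, integral_llr_comp_eq_neg_diffEntropy hBm hB,
    integral_llr_comp_eq_neg_diffEntropy hCm hC] at hgibbs
  linarith

end JointLaw

end Gibbs

section Convolution

lemma measurePreserving_add_conv {G : Type*} [AddMonoid G] [MeasurableSpace G] [MeasurableAdd₂ G]
    (μ ν : Measure G) : MeasurePreserving (fun p : G × G ↦ p.1 + p.2) (μ.prod ν) (μ ∗ ν) :=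
  ⟨by fun_prop, rfl⟩

section AddGroup

variable {G : Type*} [AddGroup G] [MeasurableSpace G] [MeasurableAdd₂ G]
  {m ν : Measure G} [m.IsAddLeftInvariant] [SigmaFinite m] [IsProbabilityMeasure ν]

theorem diffEntropy_le_diffEntropy_conv (α : Measure G) [IsProbabilityMeasure α] (h : ν ≪ m)
    (hν : Integrable (llr ν m) ν) (hαν : Integrable (llr (α ∗ ν) m) (α ∗ ν)) :
    diffEntropy m ν ≤ diffEntropy m (α ∗ ν) := by
  have hac : α ∗ ν ≪ m := Measure.conv_absolutelyContinuous h
  refine diffEntropy_le_of_lintegral_rnDeriv_le_one (measurePreserving_snd (μ := α))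
    (measurePreserving_add_conv α ν) h hac hν hαν ?_
  calc ∫⁻ p : G × G, (ν.rnDeriv m p.2)⁻¹ * (α ∗ ν).rnDeriv m (p.1 + p.2) ∂α.prod ν
      = ∫⁻ a, ∫⁻ x, (ν.rnDeriv m x)⁻¹ * (α ∗ ν).rnDeriv m (a + x) ∂ν ∂α :=
        lintegral_prod _ (by fun_prop)
    _ ≤ ∫⁻ a, ∫⁻ x, (α ∗ ν).rnDeriv m (a + x) ∂m ∂α :=
        lintegral_mono fun a ↦ lintegral_inv_rnDeriv_mul_le h (by fun_prop)
    _ = 1 := by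
        simp [lintegral_add_left_eq_self ((α ∗ ν).rnDeriv m), Measure.lintegral_rnDeriv hac]

end AddGroup

section AddCommGroup

variable {G : Type*} [AddCommGroup G] [MeasurableSpace G] [MeasurableAdd₂ G] [MeasurableNeg G]
  {m : Measure G} [m.IsAddLeftInvariant]

lemma conv_withDensity [SFinite m] (μ : Measure G) [SFinite μ] {f : G → ℝ≥0∞} (hf : Measurable f) :
    μ ∗ m.withDensity f = m.withDensity fun x ↦ ∫⁻ a, f (x - a) ∂μ := by
  refine Measure.ext_of_lintegral _ fun h hh ↦ ?_
  calc ∫⁻ x, h x ∂(μ ∗ m.withDensity f) = ∫⁻ a, ∫⁻ x, f x * h (a + x) ∂m ∂μ := by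
        rw [Measure.lintegral_conv hh]
        exact lintegral_congr fun a ↦ lintegral_withDensity_eq_lintegral_mul _ hf (by fun_prop)
    _ = ∫⁻ a, ∫⁻ x, f (x - a) * h x ∂m ∂μ := lintegral_congr fun a ↦ by
        rw [← lintegral_sub_right_eq_self _ a]; simp
    _ = ∫⁻ x, (∫⁻ a, f (x - a) ∂μ) * h x ∂m := by
        rw [lintegral_lintegral_swap (by fun_prop)]
        exact lintegral_congr fun x ↦ lintegral_mul_const _ (by fun_prop)
    _ = ∫⁻ x, h x ∂(m.withDensity fun x ↦ ∫⁻ a, f (x - a) ∂μ) :=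
        (lintegral_withDensity_eq_lintegral_mul _ (by fun_prop) hh).symm

variable [SigmaFinite m] {ν : Measure G}

lemma rnDeriv_conv (μ : Measure G) [SFinite μ] [SFinite ν] (h : ν ≪ m) :
    (μ ∗ ν).rnDeriv m =ᵐ[m] fun x ↦ ∫⁻ a, ν.rnDeriv m (x - a) ∂μ := by
  have hν : μ ∗ ν = m.withDensity fun x ↦ ∫⁻ a, ν.rnDeriv m (x - a) ∂μ := by
    rw [← conv_withDensity μ (ν.measurable_rnDeriv m), Measure.withDensity_rnDeriv_eq ν m h]
  rw [hν]
  exact Measure.rnDeriv_withDensity m (by fun_prop)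

variable [IsProbabilityMeasure ν]

lemma lintegral_lintegral_lintegral_add_mul_add (α β : Measure G) [SFinite α] [SFinite β]
    {f g h : G → ℝ≥0∞} (hf : Measurable f) (hg : Measurable g) (hh : Measurable h) :
    ∫⁻ a, ∫⁻ b, ∫⁻ x, f (a + x) * g (b + x) * h (a + (b + x)) ∂m ∂β ∂α =
      ∫⁻ x, (∫⁻ b, f (x - b) ∂β) * (∫⁻ a, g (x - a) ∂α) * h x ∂m :=
  calc ∫⁻ a, ∫⁻ b, ∫⁻ x, f (a + x) * g (b + x) * h (a + (b + x)) ∂m ∂β ∂α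
      = ∫⁻ a, ∫⁻ b, ∫⁻ x, f (x - b) * g (x - a) * h x ∂m ∂β ∂α := by
        refine lintegral_congr fun a ↦ lintegral_congr fun b ↦ ?_
        rw [← lintegral_sub_right_eq_self _ (a + b)]
        refine lintegral_congr fun x ↦ ?_
        congr 3 <;> abel_nf
    _ = ∫⁻ a, ∫⁻ x, (∫⁻ b, f (x - b) ∂β) * (g (x - a) * h x) ∂m ∂α := by
        refine lintegral_congr fun a ↦ ?_
        rw [lintegral_lintegral_swap (by fun_prop)]
        simp only [mul_assoc]
        exact lintegral_congr fun x ↦ lintegral_mul_const _ (by fun_prop)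
    _ = ∫⁻ x, (∫⁻ b, f (x - b) ∂β) * (∫⁻ a, g (x - a) ∂α) * h x ∂m := by
        rw [lintegral_lintegral_swap (by fun_prop)]
        refine lintegral_congr fun x ↦ ?_
        rw [lintegral_const_mul _ (by fun_prop), lintegral_mul_const _ (by fun_prop), mul_assoc]

lemma lintegral_rnDeriv_conv_mul_inv_le_one (α β : Measure G) [IsProbabilityMeasure α]
    [IsProbabilityMeasure β] (h : ν ≪ m) :
    ∫⁻ a, ∫⁻ b, ∫⁻ x, (α ∗ ν).rnDeriv m (a + x) * (β ∗ ν).rnDeriv m (b + x) *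
      ((α ∗ β ∗ ν).rnDeriv m (a + (b + x)))⁻¹ ∂m ∂β ∂α ≤ 1 := by
  have hα : α ∗ ν ≪ m := Measure.conv_absolutelyContinuous h
  have hβ : β ∗ ν ≪ m := Measure.conv_absolutelyContinuous h
  have hαβ : α ∗ β ∗ ν ≪ m := Measure.conv_absolutelyContinuous hβ
  have hcomm : β ∗ α ∗ ν = α ∗ β ∗ ν := by
    rw [← Measure.conv_assoc, ← Measure.conv_assoc, Measure.conv_comm β α]
  set p := (α ∗ β ∗ ν).rnDeriv m with hp
  have hp_meas : Measurable p := (α ∗ β ∗ ν).measurable_rnDeriv m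
  calc ∫⁻ a, ∫⁻ b, ∫⁻ x, (α ∗ ν).rnDeriv m (a + x) * (β ∗ ν).rnDeriv m (b + x) *
        (p (a + (b + x)))⁻¹ ∂m ∂β ∂α
      = ∫⁻ x, (∫⁻ b, (α ∗ ν).rnDeriv m (x - b) ∂β) * (∫⁻ a, (β ∗ ν).rnDeriv m (x - a) ∂α) *
        (p x)⁻¹ ∂m :=
        lintegral_lintegral_lintegral_add_mul_add α β ((α ∗ ν).measurable_rnDeriv m)
          ((β ∗ ν).measurable_rnDeriv m) hp_meas.inv
    _ = ∫⁻ x, p x * (p x * (p x)⁻¹) ∂m := by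
        refine lintegral_congr_ae ?_
        filter_upwards [rnDeriv_conv β hα, rnDeriv_conv α hβ] with x hβα_eq hαβ_eq
        rw [← hβα_eq, ← hαβ_eq, hcomm, mul_assoc]
    _ ≤ ∫⁻ x, p x ∂m := lintegral_mono fun x ↦ mul_le_of_le_one_right' (ENNReal.mul_inv_le_one _)
    _ = 1 := by simp [hp, Measure.lintegral_rnDeriv hαβ]

theorem diffEntropy_conv_conv_add_diffEntropy_le (α β : Measure G) [IsProbabilityMeasure α]
    [IsProbabilityMeasure β] (h : ν ≪ m) (hν : Integrable (llr ν m) ν)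
    (hαν : Integrable (llr (α ∗ ν) m) (α ∗ ν)) (hβν : Integrable (llr (β ∗ ν) m) (β ∗ ν))
    (hαβν : Integrable (llr (α ∗ β ∗ ν) m) (α ∗ β ∗ ν)) :
    diffEntropy m (α ∗ β ∗ ν) + diffEntropy m ν ≤
      diffEntropy m (α ∗ ν) + diffEntropy m (β ∗ ν) := by
  have hα : α ∗ ν ≪ m := Measure.conv_absolutelyContinuous h
  have hβ : β ∗ ν ≪ m := Measure.conv_absolutelyContinuous h
  have hαβ : α ∗ β ∗ ν ≪ m := Measure.conv_absolutelyContinuous hβ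
  have hBX : MeasurePreserving (fun q : G × G × G ↦ q.2) (α.prod (β.prod ν)) (β.prod ν) :=
    measurePreserving_snd
  have hX : MeasurePreserving (fun q : G × G × G ↦ q.2.2) (α.prod (β.prod ν)) ν :=
    measurePreserving_snd.comp hBX
  have hB : MeasurePreserving (fun q : G × G × G ↦ q.2.1 + q.2.2) (α.prod (β.prod ν)) (β ∗ ν) :=
    (measurePreserving_add_conv β ν).comp hBX
  have hA : MeasurePreserving (fun q : G × G × G ↦ q.1 + q.2.2) (α.prod (β.prod ν)) (α ∗ ν) :=
    (measurePreserving_add_conv α ν).comp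
      ((MeasurePreserving.id α).prod (measurePreserving_snd (μ := β) (ν := ν)))
  have hAB : MeasurePreserving (fun q : G × G × G ↦ q.1 + (q.2.1 + q.2.2)) (α.prod (β.prod ν))
      (α ∗ β ∗ ν) :=
    (measurePreserving_add_conv α (β ∗ ν)).comp
      ((MeasurePreserving.id α).prod (measurePreserving_add_conv β ν))
  refine diffEntropy_add_le_of_lintegral_rnDeriv_le_one hX hA hB hAB h hα hβ hαβ hν hαν hβν hαβν ?_
  calc ∫⁻ q : G × G × G, (ν.rnDeriv m q.2.2)⁻¹ * ((α ∗ ν).rnDeriv m (q.1 + q.2.2) *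
        (β ∗ ν).rnDeriv m (q.2.1 + q.2.2) * ((α ∗ β ∗ ν).rnDeriv m (q.1 + (q.2.1 + q.2.2)))⁻¹)
        ∂α.prod (β.prod ν)
      = ∫⁻ a, ∫⁻ b, ∫⁻ x, (ν.rnDeriv m x)⁻¹ * ((α ∗ ν).rnDeriv m (a + x) *
          (β ∗ ν).rnDeriv m (b + x) * ((α ∗ β ∗ ν).rnDeriv m (a + (b + x)))⁻¹) ∂ν ∂β ∂α := by
        rw [lintegral_prod _ (by fun_prop)]
        exact lintegral_congr fun a ↦ lintegral_prod _ (by fun_prop)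
    _ ≤ ∫⁻ a, ∫⁻ b, ∫⁻ x, (α ∗ ν).rnDeriv m (a + x) * (β ∗ ν).rnDeriv m (b + x) *
          ((α ∗ β ∗ ν).rnDeriv m (a + (b + x)))⁻¹ ∂m ∂β ∂α :=
        lintegral_mono fun a ↦ lintegral_mono fun b ↦
          lintegral_inv_rnDeriv_mul_le h (by fun_prop)
    _ ≤ 1 := lintegral_rnDeriv_conv_mul_inv_le_one α β h

end AddCommGroup

end Convolution

section IsotropicGaussian

variable (E : Type*) [NormedAddCommGroup E] [InnerProductSpace ℝ E] [FiniteDimensional ℝ E]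
  [MeasurableSpace E] [BorelSpace E]

/-- The centered Gaussian measure on `E` with covariance `y • id`, obtained by scaling the standard
one so that the degenerate case `y = 0` is the Dirac mass at the origin. -/
noncomputable def isoGaussian (y : ℝ) : Measure E :=
  (stdGaussian E).map (√y • ·)

instance isGaussian_isoGaussian (y : ℝ) : IsGaussian (isoGaussian E y) :=
  isGaussian_map (√y • ContinuousLinearMap.id ℝ E)

variable {E}

lemma charFun_isoGaussian {y : ℝ} (hy : 0 ≤ y) (t : E) :
    charFun (isoGaussian E y) t = Complex.exp (-(y * ‖t‖ ^ 2 / 2)) := by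
  rw [isoGaussian, charFun_map_smul, charFun_stdGaussian, norm_smul, norm_of_nonneg (sqrt_nonneg y)]
  norm_cast
  rw [mul_pow, sq_sqrt hy, neg_div]

theorem isoGaussian_conv {s y : ℝ} (hs : 0 ≤ s) (hy : 0 ≤ y) :
    isoGaussian E s ∗ isoGaussian E y = isoGaussian E (s + y) := by
  refine Measure.ext_of_charFun (funext fun t ↦ ?_)
  rw [charFun_conv, charFun_isoGaussian hs, charFun_isoGaussian hy,
    charFun_isoGaussian (add_nonneg hs hy), ← Complex.exp_add]
  push_cast
  ring_nf

lemma isoGaussian_conv_conv {s y : ℝ} (hs : 0 ≤ s) (hy : 0 ≤ y) (μ : Measure E) [SFinite μ] :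
    isoGaussian E s ∗ μ ∗ isoGaussian E y = μ ∗ isoGaussian E (y + s) := by
  rw [Measure.conv_comm μ, ← Measure.conv_assoc, isoGaussian_conv hs hy, Measure.conv_comm μ,
    add_comm]

end IsotropicGaussian

section GaussianDensity

variable {d : ℕ} {y : ℝ}

lemma gaussD_pos (hy : 0 < y) (x : EuclideanSpace ℝ (Fin d)) : 0 < gaussD d y x := by
  unfold gaussD
  positivity

@[fun_prop]
lemma continuous_gaussD (d : ℕ) (y : ℝ) : Continuous (gaussD d y) := by
  unfold gaussD
  fun_prop

lemma integral_gaussD_smul_cexp (hy : 0 < y) (t : EuclideanSpace ℝ (Fin d)) :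
    ∫ x, gaussD d y x • Complex.exp (⟪x, t⟫ * Complex.I) = Complex.exp (-(y * ‖t‖ ^ 2 / 2)) := by
  have hb : (0 : ℝ) < ((2 * y : ℂ)⁻¹).re := by
    norm_cast
    positivity
  have hnorm : (((2 * π * y) ^ (-(d : ℝ) / 2) : ℝ) : ℂ) *
      (π / (2 * y : ℂ)⁻¹) ^ ((d : ℂ) / 2) = 1 := by
    have hy' : 0 < 2 * π * y := by positivity
    rw [show π / (2 * y : ℂ)⁻¹ = ((2 * π * y : ℝ) : ℂ) by push_cast; field_simp,
      show (d : ℂ) / 2 = ((d / 2 : ℝ) : ℂ) by push_cast; rfl, ← Complex.ofReal_cpow hy'.le,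
      ← Complex.ofReal_mul, ← rpow_add hy', neg_div, neg_add_cancel, Real.rpow_zero,
      Complex.ofReal_one]
  calc ∫ x, gaussD d y x • Complex.exp (⟪x, t⟫ * Complex.I)
      = ∫ x : EuclideanSpace ℝ (Fin d), (((2 * π * y) ^ (-(d : ℝ) / 2) : ℝ) : ℂ) *
          Complex.exp (-(2 * y : ℂ)⁻¹ * ‖x‖ ^ 2 + Complex.I * ⟪t, x⟫) := by
        refine integral_congr_ae (ae_of_all _ fun x ↦ ?_)
        simp only [gaussD, Complex.real_smul, Complex.ofReal_mul, Complex.ofReal_exp, mul_assoc,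
          ← Complex.exp_add]
        push_cast
        rw [real_inner_comm]
        ring_nf
    _ = Complex.exp (-(y * ‖t‖ ^ 2 / 2)) := by
        rw [integral_const_mul, GaussianFourier.integral_cexp_neg_mul_sq_norm_add hb, ← mul_assoc]
        rw [finrank_euclideanSpace_fin, hnorm, one_mul, Complex.I_sq]
        congr 1
        field_simp
        norm_num

lemma withDensity_gaussD (hy : 0 < y) :
    volume.withDensity (fun x ↦ ENNReal.ofReal (gaussD d y x)) =
      isoGaussian (EuclideanSpace ℝ (Fin d)) y := by
  have hint : Integrable (gaussD d y) := by
    refine .of_integral_ne_zero fun h ↦ ?_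
    have hone := integral_gaussD_smul_cexp hy (0 : EuclideanSpace ℝ (Fin d))
    simp [integral_complex_ofReal, h] at hone
  have : IsFiniteMeasure (volume.withDensity fun x ↦ ENNReal.ofReal (gaussD d y x)) :=
    isFiniteMeasure_withDensity_ofReal hint.2
  refine Measure.ext_of_charFun (funext fun t ↦ ?_)
  rw [charFun_apply, integral_withDensity_eq_integral_toReal_smul (by fun_prop)
    (ae_of_all _ fun _ ↦ ofReal_lt_top), charFun_isoGaussian hy.le, ← integral_gaussD_smul_cexp hy]
  simp only [toReal_ofReal (gaussD_pos hy _).le]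

end GaussianDensity

section HeatFlow

lemma memLp_id_conv {E : Type*} [NormedAddCommGroup E] [MeasurableSpace E] [BorelSpace E]
    [SecondCountableTopology E] {μ ν : Measure E} [IsProbabilityMeasure μ] [IsProbabilityMeasure ν]
    {p : ℝ≥0∞} (hμ : MemLp id p μ) (hν : MemLp id p ν) : MemLp id p (μ ∗ ν) :=
  (memLp_map_measure_iff aestronglyMeasurable_id (by fun_prop)).2
    ((hμ.comp_measurePreserving measurePreserving_fst).add
      (hν.comp_measurePreserving measurePreserving_snd))

variable {d : ℕ} {y : ℝ}

lemma gaussD_le (hy : 0 < y) (x : EuclideanSpace ℝ (Fin d)) :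
    gaussD d y x ≤ (2 * π * y) ^ (-(d : ℝ) / 2) :=
  mul_le_of_le_one_right (by positivity) (exp_le_one_iff.2 (by
    rw [neg_div, neg_nonpos]
    positivity))

lemma mul_exp_mul_exp_le_gaussD_sub (hy : 0 < y) (x z : EuclideanSpace ℝ (Fin d)) :
    (2 * π * y) ^ (-(d : ℝ) / 2) * exp (-‖x‖ ^ 2 / y) * exp (-‖z‖ ^ 2 / y) ≤
      gaussD d y (x - z) := by
  have hsq : ‖x - z‖ ^ 2 ≤ 2 * ‖x‖ ^ 2 + 2 * ‖z‖ ^ 2 := by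
    linarith [parallelogram_law_with_norm ℝ x z, sq_nonneg ‖x + z‖]
  rw [gaussD, mul_assoc, ← exp_add, ← add_div]
  gcongr _ * exp ?_
  rw [div_le_div_iff₀ hy (by positivity)]
  nlinarith

/-- The density of `μ ∗ isoGaussian _ y`, that is the integrand of `entG` before `negMulLog`. -/
noncomputable def gaussConvDensity (μ : Measure (EuclideanSpace ℝ (Fin d))) (y : ℝ)
    (x : EuclideanSpace ℝ (Fin d)) : ℝ :=
  ∫ z, gaussD d y (x - z) ∂μ

variable (μ : Measure (EuclideanSpace ℝ (Fin d)))

lemma gaussConvDensity_nonneg (hy : 0 < y) (x : EuclideanSpace ℝ (Fin d)) :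
    0 ≤ gaussConvDensity μ y x :=
  integral_nonneg fun _ ↦ (gaussD_pos hy _).le

lemma measurable_gaussConvDensity [SFinite μ] (y : ℝ) : Measurable (gaussConvDensity μ y) :=
  (StronglyMeasurable.integral_prod_right' (f := fun p : _ × _ ↦ gaussD d y (p.1 - p.2))
    (Continuous.stronglyMeasurable (by fun_prop))).measurable

section Finite

variable [IsFiniteMeasure μ]

lemma integrable_gaussD_sub (hy : 0 < y) (x : EuclideanSpace ℝ (Fin d)) :
    Integrable (fun z ↦ gaussD d y (x - z)) μ :=
  .of_bound (by fun_prop) _ (ae_of_all _ fun z ↦ by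
    simpa [abs_of_pos (gaussD_pos hy _)] using gaussD_le hy (x - z))

lemma conv_isoGaussian_eq_withDensity (hy : 0 < y) :
    μ ∗ isoGaussian _ y = volume.withDensity fun x ↦ ENNReal.ofReal (gaussConvDensity μ y x) := by
  rw [← withDensity_gaussD hy, conv_withDensity _ (by fun_prop)]
  congr 1 with x
  rw [gaussConvDensity, ofReal_integral_eq_lintegral_ofReal (integrable_gaussD_sub μ hy x)
    (ae_of_all _ fun z ↦ (gaussD_pos hy _).le)]

lemma conv_isoGaussian_absolutelyContinuous (hy : 0 < y) : μ ∗ isoGaussian _ y ≪ volume := by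
  rw [conv_isoGaussian_eq_withDensity μ hy]
  exact withDensity_absolutelyContinuous _ _

lemma toReal_rnDeriv_conv_isoGaussian (hy : 0 < y) :
    (fun x ↦ ((μ ∗ isoGaussian _ y).rnDeriv volume x).toReal) =ᵐ[volume]
      gaussConvDensity μ y := by
  rw [conv_isoGaussian_eq_withDensity μ hy]
  filter_upwards [Measure.rnDeriv_withDensity volume
    (measurable_gaussConvDensity μ y).ennreal_ofReal] with x hx
  rw [hx, toReal_ofReal (gaussConvDensity_nonneg μ hy x)]

lemma entG_eq_diffEntropy (hy : 0 < y) :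
    entG d μ y = diffEntropy volume (μ ∗ isoGaussian _ y) :=
  integral_congr_ae ((toReal_rnDeriv_conv_isoGaussian μ hy).mono fun x hx ↦ by
    simp only [hx, gaussConvDensity])

lemma mul_exp_le_gaussConvDensity (hy : 0 < y) (x : EuclideanSpace ℝ (Fin d)) :
    (2 * π * y) ^ (-(d : ℝ) / 2) * exp (-‖x‖ ^ 2 / y) * ∫ z, exp (-‖z‖ ^ 2 / y) ∂μ ≤
      gaussConvDensity μ y x := by
  rw [← integral_const_mul]
  exact integral_mono_of_nonneg (ae_of_all _ fun z ↦ by positivity)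
    (integrable_gaussD_sub μ hy x) (ae_of_all _ fun z ↦ mul_exp_mul_exp_le_gaussD_sub hy x z)

end Finite

variable [IsProbabilityMeasure μ]

lemma gaussConvDensity_le (hy : 0 < y) (x : EuclideanSpace ℝ (Fin d)) :
    gaussConvDensity μ y x ≤ (2 * π * y) ^ (-(d : ℝ) / 2) := by
  simpa [gaussConvDensity] using
    integral_mono (integrable_gaussD_sub μ hy x) (integrable_const _) fun z ↦ gaussD_le hy (x - z)

lemma integral_exp_neg_sq_norm_div_pos (hy : 0 < y) : 0 < ∫ z, exp (-‖z‖ ^ 2 / y) ∂μ :=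
  integral_exp_pos (.of_bound (by fun_prop) 1 (ae_of_all _ fun z ↦ by
    rw [norm_of_nonneg (exp_pos _).le, exp_le_one_iff, neg_div, neg_nonpos]
    positivity))

lemma gaussConvDensity_pos (hy : 0 < y) (x : EuclideanSpace ℝ (Fin d)) :
    0 < gaussConvDensity μ y x := by
  have hpos := integral_exp_neg_sq_norm_div_pos μ hy
  exact (by positivity : (0 : ℝ) < _).trans_le (mul_exp_le_gaussConvDensity μ hy x)

variable {μ}

lemma integrable_llr_conv_isoGaussian (hμ : MemLp id 2 μ) (hy : 0 < y) :
    Integrable (llr (μ ∗ isoGaussian _ y) volume) (μ ∗ isoGaussian _ y) := by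
  set C := (2 * π * y) ^ (-(d : ℝ) / 2)
  set c := ∫ z, exp (-‖z‖ ^ 2 / y) ∂μ
  have hC0 : 0 < C := by positivity
  have hc0 : 0 < c := integral_exp_neg_sq_norm_div_pos μ hy
  have hsq : Integrable (fun x ↦ ‖x‖ ^ 2) (μ ∗ isoGaussian _ y) :=
    (memLp_id_conv hμ IsGaussian.memLp_two_id).integrable_norm_pow two_ne_zero
  have hllr : llr (μ ∗ isoGaussian _ y) volume =ᵐ[μ ∗ isoGaussian _ y]
      fun x ↦ log (gaussConvDensity μ y x) :=
    (conv_isoGaussian_absolutelyContinuous μ hy).ae_le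
      ((toReal_rnDeriv_conv_isoGaussian μ hy).mono fun x hx ↦ congrArg Real.log hx)
  refine integrable_of_le_of_le (measurable_llr _ _).aestronglyMeasurable
    (g₁ := fun x ↦ log C + log c - ‖x‖ ^ 2 / y) (g₂ := fun _ ↦ log C) ?_ ?_
    ((integrable_const _).sub (hsq.div_const y)) (integrable_const _)
  · filter_upwards [hllr] with x hx
    calc log C + log c - ‖x‖ ^ 2 / y = log (C * exp (-‖x‖ ^ 2 / y) * c) := by
          rw [log_mul (by positivity) hc0.ne', log_mul hC0.ne' (exp_pos _).ne', log_exp]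
          ring
      _ ≤ log (gaussConvDensity μ y x) :=
          log_le_log (by positivity) (mul_exp_le_gaussConvDensity μ hy x)
      _ = llr (μ ∗ isoGaussian _ y) volume x := hx.symm
  · filter_upwards [hllr] with x hx
    exact hx ▸ log_le_log (gaussConvDensity_pos μ hy x) (gaussConvDensity_le μ hy x)

theorem monotoneOn_entG (hμ : MemLp id 2 μ) : MonotoneOn (entG d μ) (Ioi 0) := by
  intro y hy z hz hyz
  have hflow : isoGaussian _ (z - y) ∗ μ ∗ isoGaussian _ y = μ ∗ isoGaussian _ z := by
    rw [isoGaussian_conv_conv (sub_nonneg.2 hyz) (le_of_lt hy), add_sub_cancel]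
  rw [entG_eq_diffEntropy μ hy, entG_eq_diffEntropy μ hz, ← hflow]
  exact diffEntropy_le_diffEntropy_conv _ (conv_isoGaussian_absolutelyContinuous μ hy)
    (integrable_llr_conv_isoGaussian hμ hy) (hflow ▸ integrable_llr_conv_isoGaussian hμ hz)

lemma antitoneOn_entG_increment (hμ : MemLp id 2 μ) {δ : ℝ} (hδ : 0 < δ) :
    AntitoneOn (fun y ↦ entG d μ (y + δ) - entG d μ y) (Ioi 0) := by
  intro y (hy : 0 < y) z (hz : 0 < z) hyz
  have hδy : isoGaussian _ δ ∗ μ ∗ isoGaussian _ y = μ ∗ isoGaussian _ (y + δ) :=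
    isoGaussian_conv_conv hδ.le hy.le μ
  have hzy : isoGaussian _ (z - y) ∗ μ ∗ isoGaussian _ y = μ ∗ isoGaussian _ z := by
    rw [isoGaussian_conv_conv (sub_nonneg.2 hyz) hy.le, add_sub_cancel]
  have hzδ : isoGaussian _ (z - y) ∗ isoGaussian _ δ ∗ μ ∗ isoGaussian _ y =
      μ ∗ isoGaussian _ (z + δ) := by
    rw [hδy, isoGaussian_conv_conv (sub_nonneg.2 hyz) (by positivity)]
    ring_nf
  have hint {u : ℝ} (hu : 0 < u) := integrable_llr_conv_isoGaussian hμ hu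
  have hsub := diffEntropy_conv_conv_add_diffEntropy_le (isoGaussian _ (z - y)) (isoGaussian _ δ)
    (conv_isoGaussian_absolutelyContinuous μ hy) (hint hy) (hzy ▸ hint hz)
    (hδy ▸ hint (add_pos hy hδ)) (hzδ ▸ hint (add_pos hz hδ))
  rw [hzδ, hzy, hδy, ← entG_eq_diffEntropy μ hy, ← entG_eq_diffEntropy μ hz,
    ← entG_eq_diffEntropy μ (add_pos hy hδ), ← entG_eq_diffEntropy μ (add_pos hz hδ)] at hsub
  simp only
  linarith

theorem concaveOn_entG (hμ : MemLp id 2 μ) : ConcaveOn ℝ (Ioi 0) (entG d μ) :=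
  concaveOn_of_monotoneOn_of_antitoneOn_increment (convex_Ioi 0) (monotoneOn_entG hμ)
    fun _ hδ ↦ (antitoneOn_entG_increment hμ hδ).mono fun _ hu ↦ hu.1

end HeatFlow

lemma memLp_id_of_isBounded {E : Type*} [NormedAddCommGroup E] [MeasurableSpace E]
    [BorelSpace E] [SecondCountableTopology E] {μ : Measure E} [IsFiniteMeasure μ] {K : Set E}
    (hK : Bornology.IsBounded K) (hμK : μ Kᶜ = 0) (p : ℝ≥0∞) : MemLp id p μ := by
  obtain ⟨R, hR⟩ := hK.exists_norm_le
  have hmem : ∀ᵐ x ∂μ, x ∈ K := hμK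
  exact .of_bound aestronglyMeasurable_id R (hmem.mono hR)

theorem statement8_general {d : ℕ} {μ : Measure (EuclideanSpace ℝ (Fin d))}
    [IsProbabilityMeasure μ] (hμ : MemLp id 2 μ) :
    MonotoneOn (entG d μ) (Set.Ioi 0) ∧
    (∀ y : ℝ, 0 < y →
      (∃ D : ℝ, HasDerivWithinAt (entG d μ) D (Set.Ioi y) y) ∧
      (∃ D : ℝ, HasDerivWithinAt (entG d μ) D (Set.Iio y) y)) ∧
    ContinuousOn (entG d μ) (Set.Ioi 0) ∧
    AntitoneOn (fun y => derivWithin (entG d μ) (Set.Ioi y) y) (Set.Ioi 0) ∧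
    AntitoneOn (fun y => derivWithin (entG d μ) (Set.Iio y) y) (Set.Ioi 0) := by
  have hconc := concaveOn_entG hμ
  have hint {y : ℝ} (hy : 0 < y) : y ∈ interior (Ioi 0) := by rwa [interior_Ioi]
  refine ⟨monotoneOn_entG hμ, fun y hy ↦ ⟨?_, ?_⟩, hconc.continuousOn isOpen_Ioi, ?_, ?_⟩
  · exact ⟨_, (differentiableWithinAt_Ioi_of_concaveOn hconc (hint hy)).hasDerivWithinAt⟩
  · exact ⟨_, (differentiableWithinAt_Iio_of_concaveOn hconc (hint hy)).hasDerivWithinAt⟩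
  · simpa only [interior_Ioi] using antitoneOn_rightDeriv_of_concaveOn hconc
  · simpa only [interior_Ioi] using antitoneOn_leftDeriv_of_concaveOn hconc

theorem statement8 {d : ℕ} (μ : Measure (EuclideanSpace ℝ (Fin d)))
    [IsProbabilityMeasure μ] (K : Set (EuclideanSpace ℝ (Fin d)))
    (hK : IsCompact K) (hμK : μ Kᶜ = 0) :
    MonotoneOn (entG d μ) (Set.Ioi 0) ∧
    (∀ y : ℝ, 0 < y →
      (∃ D : ℝ, HasDerivWithinAt (entG d μ) D (Set.Ioi y) y) ∧
      (∃ D : ℝ, HasDerivWithinAt (entG d μ) D (Set.Iio y) y)) ∧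
    ContinuousOn (entG d μ) (Set.Ioi 0) ∧
    AntitoneOn (fun y => derivWithin (entG d μ) (Set.Ioi y) y) (Set.Ioi 0) ∧
    AntitoneOn (fun y => derivWithin (entG d μ) (Set.Iio y) y) (Set.Ioi 0) :=
  statement8_general (memLp_id_of_isBounded hK.isBounded hμK 2)
end

section
/- Let μ and ν be absolutely continuous probability measures on ℝ^d with finite differential entropy, and let f : [0,1] → [0,1] be defined by f(δ) = (1/2)(1+δ)log(1+δ) + (1/2)(1−δ)log(1−δ). Then f( (1/2)·‖μ − ν‖₁ ) ≤ H( (μ + ν)/2 ) − (1/2)H(μ) − (1/2)H(ν), where ‖μ − ν‖₁ denotes the total variation norm of the signed measure μ − ν (equal to the L¹ distance of the densities). -/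
open MeasureTheory Real

/-!
Draw a fair bit and then a point `x` with density `f` or `g` according to the bit. With
`m = (f + g) / 2`, `h` the binary entropy and `p = max f g / (f + g)` the probability that the
likelier value of the bit given `x` is the right one, the entropy of the bit given the point is
`∫ m h(p)`, so the right-hand side of the inequality, the mutual information of bit and point, is
`log 2 - ∫ m h(p)`. By concavity of `h` it is at least `log 2 - h (∫ m p)`. Finally
`∫ m p = (1 + δ) / 2` for `δ = ‖f - g‖₁ / 2`, because `max f g = (f + g + |f - g|) / 2`, and
`log 2 - h ((1 + δ) / 2)` is the left-hand side.
-/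

/-- The Bayes success probability: the conditional probability that the more likely of two
hypotheses, of equal prior weight and with likelihoods `a` and `b`, is the true one. At
`a = b = 0` the junk value is `0`. -/
noncomputable def bayesSuccess (a b : ℝ) : ℝ := max a b / (a + b)

theorem bayesSuccess_comm (a b : ℝ) : bayesSuccess a b = bayesSuccess b a := by
  rw [bayesSuccess, bayesSuccess, max_comm, add_comm]

theorem bayesSuccess_mem_Icc {a b : ℝ} (ha : 0 ≤ a) (hb : 0 ≤ b) :
    bayesSuccess a b ∈ Set.Icc 0 1 :=
  ⟨div_nonneg (le_max_of_le_left ha) (add_nonneg ha hb),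
    div_le_one_of_le₀ (max_le_add_of_nonneg ha hb) (add_nonneg ha hb)⟩

theorem add_mul_bayesSuccess {a b : ℝ} (ha : 0 ≤ a) (hb : 0 ≤ b) :
    (a + b) * bayesSuccess a b = max a b := by
  refine mul_div_cancel_of_imp' fun hab => ?_
  obtain ⟨rfl, rfl⟩ := (add_eq_zero_iff_of_nonneg ha hb).1 hab
  exact max_self 0

theorem negMulLog_add_negMulLog (a b : ℝ) :
    negMulLog a + negMulLog b = negMulLog (a + b) + (a + b) * binEntropy (a / (a + b)) := by
  rcases eq_or_ne (a + b) 0 with hab | hab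
  · rw [hab, eq_neg_of_add_eq_zero_right hab]
    simp [negMulLog]
  · have ha : a = (a + b) * (a / (a + b)) := by field_simp
    have hb : b = (a + b) * (1 - a / (a + b)) := by field_simp; ring
    calc negMulLog a + negMulLog b
        = negMulLog ((a + b) * (a / (a + b))) + negMulLog ((a + b) * (1 - a / (a + b))) := by
          rw [← ha, ← hb]
      _ = negMulLog (a + b) + (a + b) * binEntropy (a / (a + b)) := by
          rw [negMulLog_mul, negMulLog_mul, binEntropy_eq_negMulLog_add_negMulLog_one_sub]
          ring

theorem negMulLog_add_negMulLog_eq_bayesSuccess (a b : ℝ) :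
    negMulLog a + negMulLog b =
      negMulLog (a + b) + (a + b) * binEntropy (bayesSuccess a b) := by
  wlog hab : b ≤ a generalizing a b
  · rw [add_comm (negMulLog a), add_comm a, bayesSuccess_comm]
    exact this b a (le_of_not_ge hab)
  · rw [bayesSuccess, max_eq_left hab, negMulLog_add_negMulLog]

theorem negMulLog_half (s : ℝ) : negMulLog (s / 2) = negMulLog s / 2 + s / 2 * log 2 := by
  rw [div_eq_mul_inv, negMulLog_mul]
  simp only [negMulLog, log_inv]
  ring

theorem negMulLog_midpoint (a b : ℝ) :
    negMulLog ((a + b) / 2) = 1 / 2 * negMulLog a + 1 / 2 * negMulLog b +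
      ((a + b) / 2 * log 2 - (a + b) / 2 * binEntropy (bayesSuccess a b)) := by
  rw [negMulLog_half]
  linarith [negMulLog_add_negMulLog_eq_bayesSuccess a b]

theorem half_mul_log_add_half_mul_log_eq_log_two_sub_binEntropy (δ : ℝ) :
    1 / 2 * (1 + δ) * log (1 + δ) + 1 / 2 * (1 - δ) * log (1 - δ) =
      log 2 - binEntropy ((1 + δ) / 2) := by
  have chain := negMulLog_add_negMulLog (1 + δ) (1 - δ)
  rw [show 1 + δ + (1 - δ) = 2 by ring] at chain
  simp only [negMulLog] at chain
  linarith

section Integral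

variable {α : Type*} [MeasurableSpace α] {μ : Measure α}

section Density

variable {E : Type*} [NormedAddCommGroup E] [NormedSpace ℝ E] {w : α → ℝ}

theorem toReal_ofReal_smul_ae_eq (hw0 : 0 ≤ᵐ[μ] w) (q : α → E) :
    (fun x => (ENNReal.ofReal (w x)).toReal • q x) =ᵐ[μ] fun x => w x • q x :=
  hw0.mono fun x hx => congrArg (· • q x) (ENNReal.toReal_ofReal hx)

theorem integrable_withDensity_ofReal_iff (hw : AEMeasurable w μ) (hw0 : 0 ≤ᵐ[μ] w) {q : α → E} :
    Integrable q (μ.withDensity fun x => ENNReal.ofReal (w x)) ↔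
      Integrable (fun x => w x • q x) μ := by
  rw [integrable_withDensity_iff_integrable_smul₀' hw.ennreal_ofReal
    (ae_of_all _ fun _ => ENNReal.ofReal_lt_top)]
  exact integrable_congr (toReal_ofReal_smul_ae_eq hw0 q)

theorem integral_withDensity_ofReal (hw : AEMeasurable w μ) (hw0 : 0 ≤ᵐ[μ] w) (q : α → E) :
    ∫ x, q x ∂μ.withDensity (fun x => ENNReal.ofReal (w x)) = ∫ x, w x • q x ∂μ := by
  rw [integral_withDensity_eq_integral_toReal_smul₀ hw.ennreal_ofReal
    (ae_of_all _ fun _ => ENNReal.ofReal_lt_top)]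
  exact integral_congr_ae (toReal_ofReal_smul_ae_eq hw0 q)

theorem isProbabilityMeasure_withDensity_ofReal (hw0 : 0 ≤ᵐ[μ] w) (hw1 : ∫ x, w x ∂μ = 1) :
    IsProbabilityMeasure (μ.withDensity fun x => ENNReal.ofReal (w x)) := by
  constructor
  rw [withDensity_apply _ MeasurableSet.univ, Measure.restrict_univ,
    ← ofReal_integral_eq_lintegral_ofReal (integrable_of_integral_eq_one hw1) hw0, hw1,
    ENNReal.ofReal_one]

theorem integral_smul_comp_le_map_integral_smul [CompleteSpace E] {s : Set E} {φ : E → ℝ}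
    {p : α → E} (hφ : ConcaveOn ℝ s φ) (hφc : ContinuousOn φ s) (hs : IsClosed s)
    (hw0 : 0 ≤ᵐ[μ] w) (hw1 : ∫ x, w x ∂μ = 1) (hps : ∀ᵐ x ∂μ, p x ∈ s)
    (hp : Integrable (fun x => w x • p x) μ) (hφp : Integrable (fun x => w x • φ (p x)) μ) :
    ∫ x, w x • φ (p x) ∂μ ≤ φ (∫ x, w x • p x ∂μ) := by
  have hw : AEMeasurable w μ := (integrable_of_integral_eq_one hw1).aemeasurable
  have := isProbabilityMeasure_withDensity_ofReal hw0 hw1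
  rw [← integral_withDensity_ofReal hw hw0, ← integral_withDensity_ofReal hw hw0]
  exact hφ.le_map_integral hφc hs ((withDensity_absolutelyContinuous μ _).ae_le hps)
    ((integrable_withDensity_ofReal_iff hw hw0).2 hp)
    ((integrable_withDensity_ofReal_iff hw hw0).2 hφp)

end Density

theorem integrable_mul_binEntropy {w p : α → ℝ} (hw : Integrable w μ)
    (hp : AEStronglyMeasurable p μ) (hp01 : ∀ᵐ x ∂μ, p x ∈ Set.Icc 0 1) :
    Integrable (fun x => w x * binEntropy (p x)) μ := by
  refine hw.mul_bdd (c := log 2) (binEntropy_continuous.comp_aestronglyMeasurable hp) ?_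
  filter_upwards [hp01] with x hx
  rw [norm_of_nonneg (binEntropy_nonneg hx.1 hx.2)]
  exact binEntropy_le_log_two

variable {f g : α → ℝ}

theorem ae_bayesSuccess_mem_Icc (hf0 : 0 ≤ᵐ[μ] f) (hg0 : 0 ≤ᵐ[μ] g) :
    ∀ᵐ x ∂μ, bayesSuccess (f x) (g x) ∈ Set.Icc 0 1 := by
  filter_upwards [hf0, hg0] with x hfx hgx using bayesSuccess_mem_Icc hfx hgx

theorem integrable_half_add_mul_binEntropy_bayesSuccess (hf : Integrable f μ)
    (hg : Integrable g μ) (hf0 : 0 ≤ᵐ[μ] f) (hg0 : 0 ≤ᵐ[μ] g) :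
    Integrable (fun x => (f x + g x) / 2 * binEntropy (bayesSuccess (f x) (g x))) μ := by
  have hp : AEMeasurable (fun x => bayesSuccess (f x) (g x)) μ :=
    (hf.aemeasurable.max hg.aemeasurable).div (hf.aemeasurable.add hg.aemeasurable)
  exact integrable_mul_binEntropy ((hf.add hg).div_const 2) hp.aestronglyMeasurable
    (ae_bayesSuccess_mem_Icc hf0 hg0)

theorem half_add_mul_bayesSuccess_ae_eq (hf0 : 0 ≤ᵐ[μ] f) (hg0 : 0 ≤ᵐ[μ] g) :
    (fun x => (f x + g x) / 2 * bayesSuccess (f x) (g x)) =ᵐ[μ]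
      fun x => ((f x + g x) / 2 + 1 / 2 * |f x - g x|) / 2 := by
  filter_upwards [hf0, hg0] with x hfx hgx
  have hmax := sup_eq_half_smul_add_add_abs_sub' ℝ (f x) (g x)
  rw [abs_sub_comm, smul_eq_mul] at hmax
  linarith [add_mul_bayesSuccess hfx hgx]

theorem integral_half_add_mul_binEntropy_bayesSuccess_le (hf : Integrable f μ)
    (hg : Integrable g μ) (hf0 : 0 ≤ᵐ[μ] f) (hg0 : 0 ≤ᵐ[μ] g)
    (hfg : ∫ x, (f x + g x) / 2 ∂μ = 1) :
    ∫ x, (f x + g x) / 2 * binEntropy (bayesSuccess (f x) (g x)) ∂μ ≤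
      binEntropy ((1 + 1 / 2 * ∫ x, |f x - g x| ∂μ) / 2) := by
  have hm : Integrable (fun x => (f x + g x) / 2) μ := (hf.add hg).div_const 2
  have hm0 : 0 ≤ᵐ[μ] fun x => (f x + g x) / 2 := by
    filter_upwards [hf0, hg0] with x hfx hgx using
      div_nonneg (add_nonneg hfx hgx) zero_le_two
  have hD : Integrable (fun x => 1 / 2 * |f x - g x|) μ := (hf.sub hg).abs.const_mul _
  have hmp := half_add_mul_bayesSuccess_ae_eq hf0 hg0
  have success : ∫ x, (f x + g x) / 2 * bayesSuccess (f x) (g x) ∂μ =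
      (1 + 1 / 2 * ∫ x, |f x - g x| ∂μ) / 2 := by
    rw [integral_congr_ae hmp, integral_div, integral_add hm hD, hfg, integral_const_mul]
  rw [← success]
  exact integral_smul_comp_le_map_integral_smul strictConcave_binEntropy.concaveOn
    binEntropy_continuous.continuousOn isClosed_Icc hm0 hfg (ae_bayesSuccess_mem_Icc hf0 hg0)
    (((hm.add hD).div_const 2).congr hmp.symm)
    (integrable_half_add_mul_binEntropy_bayesSuccess hf hg hf0 hg0)

theorem integral_negMulLog_midpoint (hf : Integrable f μ) (hg : Integrable g μ)
    (hf0 : 0 ≤ᵐ[μ] f) (hg0 : 0 ≤ᵐ[μ] g)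
    (hfent : Integrable (fun x => negMulLog (f x)) μ)
    (hgent : Integrable (fun x => negMulLog (g x)) μ) :
    ∫ x, negMulLog ((f x + g x) / 2) ∂μ =
      1 / 2 * (∫ x, negMulLog (f x) ∂μ) + 1 / 2 * (∫ x, negMulLog (g x) ∂μ) +
        ((∫ x, (f x + g x) / 2 ∂μ) * log 2 -
          ∫ x, (f x + g x) / 2 * binEntropy (bayesSuccess (f x) (g x)) ∂μ) := by
  have hm : Integrable (fun x => (f x + g x) / 2 * log 2) μ :=
    ((hf.add hg).div_const 2).mul_const _
  have hcond := integrable_half_add_mul_binEntropy_bayesSuccess hf hg hf0 hg0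
  have hgain : Integrable (fun x => (f x + g x) / 2 * log 2 -
      (f x + g x) / 2 * binEntropy (bayesSuccess (f x) (g x))) μ := hm.sub hcond
  have hf' : Integrable (fun x => 1 / 2 * negMulLog (f x)) μ := hfent.const_mul _
  have hg' : Integrable (fun x => 1 / 2 * negMulLog (g x)) μ := hgent.const_mul _
  simp_rw [negMulLog_midpoint]
  rw [integral_add (hf'.fun_add hg') hgain, integral_add hf' hg', integral_sub hm hcond,
    integral_const_mul, integral_const_mul, integral_mul_const]

theorem statement10_general (hf : Integrable f μ) (hg : Integrable g μ)
    (hf0 : 0 ≤ᵐ[μ] f) (hg0 : 0 ≤ᵐ[μ] g) (hfg : ∫ x, (f x + g x) / 2 ∂μ = 1)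
    (hfent : Integrable (fun x => negMulLog (f x)) μ)
    (hgent : Integrable (fun x => negMulLog (g x)) μ) :
    (fun δ : ℝ => 1 / 2 * (1 + δ) * log (1 + δ) + 1 / 2 * (1 - δ) * log (1 - δ))
        (1 / 2 * ∫ x, |f x - g x| ∂μ) ≤
      (∫ x, negMulLog ((f x + g x) / 2) ∂μ) - 1 / 2 * (∫ x, negMulLog (f x) ∂μ) -
        1 / 2 * ∫ x, negMulLog (g x) ∂μ := by
  have fano := integral_half_add_mul_binEntropy_bayesSuccess_le hf hg hf0 hg0 hfg
  have mutualInfo := integral_negMulLog_midpoint hf hg hf0 hg0 hfent hgent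
  rw [hfg, one_mul] at mutualInfo
  beta_reduce
  rw [half_mul_log_add_half_mul_log_eq_log_two_sub_binEntropy]
  linarith

end Integral

theorem statement10 {d : ℕ} (f g : EuclideanSpace ℝ (Fin d) → ℝ)
    (hfm : Measurable f) (hgm : Measurable g)
    (hf0 : ∀ x, 0 ≤ f x) (hg0 : ∀ x, 0 ≤ g x)
    (hfi : Integrable f) (hgi : Integrable g)
    (hf1 : ∫ x, f x = 1) (hg1 : ∫ x, g x = 1)
    (hfent : Integrable (fun x => Real.negMulLog (f x)))
    (hgent : Integrable (fun x => Real.negMulLog (g x))) :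
    (fun δ : ℝ => 1 / 2 * (1 + δ) * Real.log (1 + δ) + 1 / 2 * (1 - δ) * Real.log (1 - δ))
        (1 / 2 * ∫ x, |f x - g x|) ≤
      (∫ x, Real.negMulLog ((f x + g x) / 2)) - 1 / 2 * (∫ x, Real.negMulLog (f x)) -
        1 / 2 * ∫ x, Real.negMulLog (g x) :=
  statement10_general hfi hgi (ae_of_all _ hf0) (ae_of_all _ hg0)
    (by rw [integral_div, integral_add hfi hgi, hf1, hg1]; norm_num) hfent hgent
end

section
/- Let n ∈ ℕ, let μ be an absolutely continuous probability measure on ℝ^d with finite differential entropy, and let t ∈ ℝ^d. For k ≥ 0 let B_k^{(t)} denote the k-fold convolution of the measure (1/2)(δ_t + δ_{−t}) (with B_0^{(t)} = δ_0), and let f(δ) = (1/2)(1+δ)log(1+δ) + (1/2)(1−δ)log(1−δ) for δ ∈ [0,1]. Then ∑_{k=0}^{n−1} f( (1/2)·‖ μ * B_k^{(t)} * (δ_t − δ_{−t}) ‖₁ ) ≤ H( μ * B_n^{(t)} ) − H(μ). -/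
/-!
Passing from `μ * B_k` to `μ * B_{k+1}` replaces a density by the average `m = (p + q) / 2` of two
of its translates. The entropy gained is the Jensen–Shannon divergence of `p` and `q`, which by the
chain rule for entropy equals `log 2` minus the `m`-average of `binEntropy θ`, where `θ ∈ [0, 1/2]`
is the share of `min p q` in `p + q`. As the `m`-average of `θ` is `(1 - ‖p - q‖₁ / 2) / 2`,
concavity of the binary entropy bounds each gain from below, and the gains telescope.
-/

open MeasureTheory Real

/-- The density of `μ * B_k^{(t)}`, where `μ` has density `g` and `B_k^{(t)}` is the `k`-fold
convolution of `(δ_t + δ_{-t})/2`. -/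
noncomputable def densBk {d : ℕ} (g : EuclideanSpace ℝ (Fin d) → ℝ)
    (t : EuclideanSpace ℝ (Fin d)) (k : ℕ) (x : EuclideanSpace ℝ (Fin d)) : ℝ :=
  (2 : ℝ) ^ (-(k : ℤ)) * ∑ ε : Fin k → Bool,
    g (x - (∑ i, if ε i then (1 : ℝ) else -1) • t)

section BinaryEntropy

/-- The entropy deficit `f(δ)` of a `±1`-valued random variable with mean `δ`, compared with a fair
sign. -/
noncomputable def signEntropyDeficit (δ : ℝ) : ℝ := log 2 - binEntropy ((1 - δ) / 2)

lemma negMulLog_one_half : negMulLog (1 / 2) = 1 / 2 * log 2 := by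
  simp [negMulLog, log_inv]

lemma signEntropyDeficit_eq_mul_log_add_mul_log (δ : ℝ) :
    signEntropyDeficit δ =
      1 / 2 * (1 + δ) * log (1 + δ) + 1 / 2 * (1 - δ) * log (1 - δ) := by
  rw [signEntropyDeficit, binEntropy_eq_negMulLog_add_negMulLog_one_sub,
    show (1 - δ) / 2 = (1 - δ) * (1 / 2) by ring,
    show 1 - (1 - δ) * (1 / 2) = (1 + δ) * (1 / 2) by ring,
    negMulLog_mul, negMulLog_mul, negMulLog_one_half]
  simp only [negMulLog]
  ring

lemma abs_binEntropy_le_log_two {p : ℝ} (hp : p ∈ Set.Icc 0 1) : |binEntropy p| ≤ log 2 :=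
  (abs_of_nonneg (binEntropy_nonneg hp.1 hp.2)).trans_le binEntropy_le_log_two

lemma negMulLog_add_negMulLog_eq_add_mul_binEntropy (u v : ℝ) :
    negMulLog u + negMulLog v = negMulLog (u + v) + (u + v) * binEntropy (v / (u + v)) := by
  rcases eq_or_ne (u + v) 0 with hs | hs
  · -- `negMulLog` is odd, since `log (-x) = log x`
    rw [eq_neg_of_add_eq_zero_left hs]
    simp [negMulLog]
  · have hv : negMulLog v = negMulLog ((u + v) * (v / (u + v))) := by rw [mul_div_cancel₀ _ hs]
    have hu : negMulLog u = negMulLog ((u + v) * (1 - v / (u + v))) := by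
      congr 1
      field_simp
      ring
    rw [hu, hv, negMulLog_mul, negMulLog_mul, binEntropy_eq_negMulLog_add_negMulLog_one_sub]
    ring

/-- The share of the smaller of `u` and `v` in their sum, the `θ` of the argument above. It is `0`
when `u + v = 0`. -/
noncomputable def minorShare (u v : ℝ) : ℝ := min u v / (u + v)

lemma minorShare_comm (u v : ℝ) : minorShare u v = minorShare v u := by
  rw [minorShare, minorShare, min_comm, add_comm]

lemma minorShare_mem_Icc {u v : ℝ} (hu : 0 ≤ u) (hv : 0 ≤ v) : minorShare u v ∈ Set.Icc 0 1 :=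
  ⟨div_nonneg (le_min hu hv) (add_nonneg hu hv),
    div_le_one_of_le₀ (min_le_of_left_le (le_add_of_nonneg_right hv)) (add_nonneg hu hv)⟩

lemma half_add_mul_minorShare {u v : ℝ} (hu : 0 ≤ u) (hv : 0 ≤ v) :
    (u + v) / 2 * minorShare u v = ((u + v) / 2 - |u - v| / 2) / 2 := by
  have hmin : (u + v) * (min u v / (u + v)) = min u v :=
    mul_div_cancel_of_imp' fun h => by
      obtain ⟨rfl, rfl⟩ := (add_eq_zero_iff_of_nonneg hu hv).1 h
      exact min_self 0
  rw [minorShare, div_mul_eq_mul_div, hmin]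
  linarith [max_add_min u v, max_sub_min_eq_abs' u v]

lemma negMulLog_half_add (u v : ℝ) :
    negMulLog ((u + v) / 2) = (negMulLog u + negMulLog v) / 2 +
      (u + v) / 2 * (log 2 - binEntropy (minorShare u v)) := by
  wlog h : v ≤ u generalizing u v
  · rw [minorShare_comm, add_comm u, add_comm (negMulLog u)]
    exact this v u (le_of_not_ge h)
  · rw [negMulLog_add_negMulLog_eq_add_mul_binEntropy, minorShare, min_eq_right h,
      div_eq_mul_one_div (u + v) 2, negMulLog_mul, negMulLog_one_half]
    ring

end BinaryEntropy

section Density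

variable {α β : Type*} {_ : MeasurableSpace α} {_ : MeasurableSpace β} {μ : Measure α}
  {ν : Measure β} {p q : α → ℝ} {σ : β → α}

/-- The function `p` is a probability density with respect to `μ`. -/
structure IsProbabilityDensity (p : α → ℝ) (μ : Measure α) : Prop where
  nonneg : 0 ≤ᵐ[μ] p
  integrable : Integrable p μ
  integral_eq_one : ∫ x, p x ∂μ = 1

/-- The function `p` is a probability density with respect to `μ`, and the measure with density `p`
has finite differential entropy. -/
structure IsFiniteEntropyDensity (p : α → ℝ) (μ : Measure α) : Prop
    extends IsProbabilityDensity p μ where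
  integrable_negMulLog : Integrable (fun x => negMulLog (p x)) μ

/-- The differential entropy of the measure with density `p` with respect to `μ`. -/
noncomputable def differentialEntropy (p : α → ℝ) (μ : Measure α) : ℝ :=
  ∫ x, negMulLog (p x) ∂μ

lemma integral_comp_of_measurePreserving (hσ : MeasurePreserving σ ν μ)
    (hp : AEStronglyMeasurable p μ) : ∫ x, p (σ x) ∂ν = ∫ x, p x ∂μ := by
  rw [← hσ.map_eq] at hp ⊢
  exact (integral_map hσ.aemeasurable hp).symm

lemma differentialEntropy_comp (hσ : MeasurePreserving σ ν μ) (hp : AEStronglyMeasurable p μ) :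
    differentialEntropy (p ∘ σ) ν = differentialEntropy p μ :=
  integral_comp_of_measurePreserving hσ (continuous_negMulLog.comp_aestronglyMeasurable hp)

lemma aemeasurable_minorShare (hp : AEMeasurable p μ) (hq : AEMeasurable q μ) :
    AEMeasurable (fun x => minorShare (p x) (q x)) μ :=
  (hp.min hq).div (hp.add hq)

lemma ae_minorShare_mem_Icc (hp : 0 ≤ᵐ[μ] p) (hq : 0 ≤ᵐ[μ] q) :
    ∀ᵐ x ∂μ, minorShare (p x) (q x) ∈ Set.Icc 0 1 := by
  filter_upwards [hp, hq] with x hpx hqx using minorShare_mem_Icc hpx hqx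

namespace IsProbabilityDensity

lemma comp_measurePreserving (hp : IsProbabilityDensity p μ) (hσ : MeasurePreserving σ ν μ) :
    IsProbabilityDensity (p ∘ σ) ν where
  nonneg := hσ.quasiMeasurePreserving.ae hp.nonneg
  integrable := hσ.integrable_comp_of_integrable hp.integrable
  integral_eq_one :=
    (integral_comp_of_measurePreserving hσ hp.integrable.aestronglyMeasurable).trans
      hp.integral_eq_one

lemma half_add (hp : IsProbabilityDensity p μ) (hq : IsProbabilityDensity q μ) :
    IsProbabilityDensity (fun x => (p x + q x) / 2) μ where
  nonneg := by
    filter_upwards [hp.nonneg, hq.nonneg] with x hpx hqx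
    exact div_nonneg (add_nonneg hpx hqx) zero_le_two
  integrable := (hp.integrable.add hq.integrable).div_const 2
  integral_eq_one := by
    rw [integral_div, integral_add hp.integrable hq.integrable, hp.integral_eq_one,
      hq.integral_eq_one, add_self_div_two]

lemma integral_mul_binEntropy_le {w θ : α → ℝ} (hw : IsProbabilityDensity w μ)
    (hθm : AEMeasurable θ μ) (hθ : ∀ᵐ x ∂μ, θ x ∈ Set.Icc 0 1) :
    ∫ x, w x * binEntropy (θ x) ∂μ ≤ binEntropy (∫ x, w x * θ x ∂μ) := by
  let ρ := μ.withDensity fun x => ENNReal.ofReal (w x)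
  have hρμ : ρ ≪ μ := withDensity_absolutelyContinuous _ _
  have : IsProbabilityMeasure ρ := ⟨by
    rw [withDensity_apply _ .univ, Measure.restrict_univ,
      ← ofReal_integral_eq_lintegral_ofReal hw.integrable hw.nonneg, hw.integral_eq_one,
      ENNReal.ofReal_one]⟩
  have integral_ρ (φ : α → ℝ) : ∫ x, φ x ∂ρ = ∫ x, w x * φ x ∂μ := by
    rw [integral_withDensity_eq_integral_toReal_smul₀ hw.integrable.aemeasurable.ennreal_ofReal
      (.of_forall fun _ => ENNReal.ofReal_lt_top)]
    refine integral_congr_ae ?_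
    filter_upwards [hw.nonneg] with x hx
    rw [ENNReal.toReal_ofReal hx, smul_eq_mul]
  have hθρ : ∀ᵐ x ∂ρ, θ x ∈ Set.Icc 0 1 := hρμ.ae_le hθ
  have hθmρ : AEMeasurable θ ρ := hθm.mono_ac hρμ
  have hbinEntropy : Integrable (binEntropy ∘ θ) ρ :=
    .of_bound (binEntropy_continuous.comp_aestronglyMeasurable hθmρ.aestronglyMeasurable) (log 2)
      (hθρ.mono fun _ => abs_binEntropy_le_log_two)
  rw [← integral_ρ fun x => binEntropy (θ x), ← integral_ρ θ]
  exact strictConcave_binEntropy.concaveOn.le_map_integral binEntropy_continuous.continuousOn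
    isClosed_Icc hθρ (.of_mem_Icc 0 1 hθmρ hθρ) hbinEntropy

lemma integrable_half_add_mul_binEntropy (hp : IsProbabilityDensity p μ)
    (hq : IsProbabilityDensity q μ) :
    Integrable (fun x => (p x + q x) / 2 * binEntropy (minorShare (p x) (q x))) μ :=
  have hθm := aemeasurable_minorShare hp.integrable.aemeasurable hq.integrable.aemeasurable
  (hp.half_add hq).integrable.mul_bdd
    (binEntropy_continuous.comp_aestronglyMeasurable hθm.aestronglyMeasurable)
    ((ae_minorShare_mem_Icc hp.nonneg hq.nonneg).mono fun _ => abs_binEntropy_le_log_two)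

lemma integral_half_add_mul_minorShare (hp : IsProbabilityDensity p μ)
    (hq : IsProbabilityDensity q μ) :
    ∫ x, (p x + q x) / 2 * minorShare (p x) (q x) ∂μ =
      (1 - 1 / 2 * ∫ x, |p x - q x| ∂μ) / 2 := by
  have hcongr : ∀ᵐ x ∂μ, (p x + q x) / 2 * minorShare (p x) (q x) =
      ((p x + q x) / 2 - |p x - q x| / 2) / 2 := by
    filter_upwards [hp.nonneg, hq.nonneg] with x hpx hqx using half_add_mul_minorShare hpx hqx
  have habs : Integrable (fun x => |p x - q x| / 2) μ :=
    (hp.integrable.sub hq.integrable).abs.div_const 2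
  rw [integral_congr_ae hcongr, integral_div, integral_sub (hp.half_add hq).integrable habs,
    (hp.half_add hq).integral_eq_one, integral_div, one_div_mul_eq_div]

end IsProbabilityDensity

namespace IsFiniteEntropyDensity

lemma comp_measurePreserving (hp : IsFiniteEntropyDensity p μ) (hσ : MeasurePreserving σ ν μ) :
    IsFiniteEntropyDensity (p ∘ σ) ν where
  toIsProbabilityDensity := hp.toIsProbabilityDensity.comp_measurePreserving hσ
  integrable_negMulLog := hσ.integrable_comp_of_integrable hp.integrable_negMulLog

lemma half_add (hp : IsFiniteEntropyDensity p μ) (hq : IsFiniteEntropyDensity q μ) :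
    IsFiniteEntropyDensity (fun x => (p x + q x) / 2) μ where
  toIsProbabilityDensity := hp.toIsProbabilityDensity.half_add hq.toIsProbabilityDensity
  integrable_negMulLog := by
    have hm := hp.toIsProbabilityDensity.half_add hq.toIsProbabilityDensity
    simp only [negMulLog_half_add, mul_sub]
    exact ((hp.integrable_negMulLog.add hq.integrable_negMulLog).div_const 2).add
      ((hm.integrable.mul_const _).sub
        (hp.integrable_half_add_mul_binEntropy hq.toIsProbabilityDensity))

lemma differentialEntropy_half_add (hp : IsFiniteEntropyDensity p μ)
    (hq : IsFiniteEntropyDensity q μ) :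
    differentialEntropy (fun x => (p x + q x) / 2) μ =
      (differentialEntropy p μ + differentialEntropy q μ) / 2 +
        (log 2 - ∫ x, (p x + q x) / 2 * binEntropy (minorShare (p x) (q x)) ∂μ) := by
  have hnegMulLog : Integrable (fun x => (negMulLog (p x) + negMulLog (q x)) / 2) μ :=
    (hp.integrable_negMulLog.add hq.integrable_negMulLog).div_const 2
  have hlog : Integrable (fun x => (p x + q x) / 2 * log 2) μ :=
    (hp.half_add hq).integrable.mul_const _
  have hbinEntropy := hp.integrable_half_add_mul_binEntropy hq.toIsProbabilityDensity
  simp only [differentialEntropy, negMulLog_half_add, mul_sub]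
  rw [integral_add hnegMulLog (by exact hlog.sub hbinEntropy), integral_div,
    integral_add hp.integrable_negMulLog hq.integrable_negMulLog, integral_sub hlog hbinEntropy,
    integral_mul_const, (hp.half_add hq).integral_eq_one, one_mul]

theorem signEntropyDeficit_le_differentialEntropy_half_add_sub (hp : IsFiniteEntropyDensity p μ)
    (hq : IsFiniteEntropyDensity q μ) :
    signEntropyDeficit (1 / 2 * ∫ x, |p x - q x| ∂μ) ≤
      differentialEntropy (fun x => (p x + q x) / 2) μ -
        (differentialEntropy p μ + differentialEntropy q μ) / 2 := by
  have jensen := (hp.half_add hq).integral_mul_binEntropy_le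
    (aemeasurable_minorShare hp.integrable.aemeasurable hq.integrable.aemeasurable)
    (ae_minorShare_mem_Icc hp.nonneg hq.nonneg)
  rw [hp.integral_half_add_mul_minorShare hq.toIsProbabilityDensity] at jensen
  rw [signEntropyDeficit, hp.differentialEntropy_half_add hq, add_sub_cancel_left]
  exact sub_le_sub_left jensen _

end IsFiniteEntropyDensity

theorem statement11_general {p : ℕ → α → ℝ} {σ τ : ℕ → α → α}
    (hσ : ∀ k, MeasurePreserving (σ k) μ μ) (hτ : ∀ k, MeasurePreserving (τ k) μ μ)
    (hp₀ : IsFiniteEntropyDensity (p 0) μ)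
    (hp : ∀ k x, p (k + 1) x = (p k (σ k x) + p k (τ k x)) / 2) (n : ℕ) :
    ∑ k ∈ Finset.range n, signEntropyDeficit (1 / 2 * ∫ x, |p k (σ k x) - p k (τ k x)| ∂μ) ≤
      differentialEntropy (p n) μ - differentialEntropy (p 0) μ := by
  have hp_succ (k) : p (k + 1) = fun x => ((p k ∘ σ k) x + (p k ∘ τ k) x) / 2 := funext (hp k)
  have density (k) : IsFiniteEntropyDensity (p k) μ := by
    induction k with
    | zero => exact hp₀
    | succ k ih =>
      rw [hp_succ]
      exact (ih.comp_measurePreserving (hσ k)).half_add (ih.comp_measurePreserving (hτ k))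
  rw [← Finset.sum_range_sub fun k => differentialEntropy (p k) μ]
  refine Finset.sum_le_sum fun k _ => ?_
  have hp_meas := (density k).integrable.aestronglyMeasurable
  have gain := ((density k).comp_measurePreserving (hσ k))
    |>.signEntropyDeficit_le_differentialEntropy_half_add_sub
      ((density k).comp_measurePreserving (hτ k))
  rwa [differentialEntropy_comp (hσ k) hp_meas, differentialEntropy_comp (hτ k) hp_meas,
    add_self_div_two, ← hp_succ] at gain

end Density

section BernoulliConvolution

variable {d : ℕ} (g : EuclideanSpace ℝ (Fin d) → ℝ) (t : EuclideanSpace ℝ (Fin d))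

lemma densBk_zero : densBk g t 0 = g := by
  funext x
  simp [densBk]

lemma densBk_succ (k : ℕ) (x : EuclideanSpace ℝ (Fin d)) :
    densBk g t (k + 1) x = (densBk g t k (x - t) + densBk g t k (x + t)) / 2 := by
  have sub_one_add_smul (s : ℝ) : x - (1 + s) • t = x - t - s • t := by module
  have sub_neg_one_add_smul (s : ℝ) : x - (-1 + s) • t = x + t - s • t := by module
  have two_zpow_neg_succ : (2 : ℝ) ^ (-((k + 1 : ℕ) : ℤ)) = 2 ^ (-(k : ℤ)) / 2 := by
    rw [Nat.cast_succ, neg_add, zpow_add₀ two_ne_zero, zpow_neg_one, div_eq_mul_inv]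
  simp only [densBk]
  rw [← (Fin.consEquiv fun _ : Fin (k + 1) => Bool).sum_comp, Fintype.sum_prod_type,
    Fintype.sum_bool, two_zpow_neg_succ]
  simp only [Fin.consEquiv_apply, Fin.sum_univ_succ, Fin.cons_zero, Fin.cons_succ, if_true,
    Bool.false_eq_true, if_false, sub_one_add_smul, sub_neg_one_add_smul]
  ring

end BernoulliConvolution

theorem statement11 {d : ℕ} (n : ℕ) (g : EuclideanSpace ℝ (Fin d) → ℝ)
    (t : EuclideanSpace ℝ (Fin d))
    (hgm : Measurable g) (hg0 : ∀ x, 0 ≤ g x) (hgi : Integrable g) (hg1 : ∫ x, g x = 1)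
    (hgent : Integrable (fun x => Real.negMulLog (g x))) :
    ∑ k ∈ Finset.range n,
        (fun δ : ℝ => 1 / 2 * (1 + δ) * Real.log (1 + δ) + 1 / 2 * (1 - δ) * Real.log (1 - δ))
          (1 / 2 * ∫ x, |densBk g t k (x - t) - densBk g t k (x + t)|) ≤
      (∫ x, Real.negMulLog (densBk g t n x)) - ∫ x, Real.negMulLog (g x) := by
  have hg : IsFiniteEntropyDensity (densBk g t 0) volume := by
    rw [densBk_zero]
    exact ⟨⟨.of_forall hg0, hgi, hg1⟩, hgent⟩
  simpa only [signEntropyDeficit_eq_mul_log_add_mul_log, differentialEntropy, densBk_zero] using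
    statement11_general (fun _ => measurePreserving_sub_right volume t)
      (fun _ => measurePreserving_add_right volume t) hg (densBk_succ g t) n
end

section
/- Let d ∈ ℕ, r₁ > 0, and let μ be a probability measure on ℝ^d with density f such that: (1) there exist C, ε > 0 with f(x) ≤ C·e^{−ε|x|²} for all x; (2) f is twice differentiable; (3) f and ∂f/∂x₁ are bounded and Lipschitz; (4) the function x ↦ sup_{y ∈ B₁(x)} |∂²f/∂y₁²(y)| is in L¹(ℝ^d). For y > 0 let μ_y denote the convolution of μ with the law of (√y·Z, 0, …, 0) where Z is a standard one-dimensional normal random variable (i.e. the centered degenerate Gaussian with covariance matrix y·e₁e₁ᵀ). Then (1/2) ∫_0^{r₁²} ‖ ∂/∂x₁ (density of μ_y) ‖₁² dy ≤ H(μ_{r₁²}) − H(μ). -/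
open MeasureTheory Real

/-- The density of the convolution of the measure with density `f` with the law of
`(√y Z, 0, …, 0)`, `Z` a standard normal. -/
noncomputable def densConv1 {d : ℕ} (f : EuclideanSpace ℝ (Fin d) → ℝ)
    (e₁ : EuclideanSpace ℝ (Fin d)) (y : ℝ) (x : EuclideanSpace ℝ (Fin d)) : ℝ :=
  ∫ s : ℝ, f (x - s • e₁) * ((2 * Real.pi * y) ^ (-(1 : ℝ) / 2) * Real.exp (-s ^ 2 / (2 * y)))

/-!
The smoothed density `u y`, the density of `μ_y`, solves the heat equation `∂u/∂y = ½ ∂²u/∂x₁²`.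
Differentiating the entropy under the integral sign and integrating by parts in `x₁` gives
de Bruijn's identity: the entropy grows at rate `½ ∫ (∂u/∂x₁)² / u`, half the Fisher information in
the direction `x₁`. By Cauchy–Schwarz that information dominates `(∫ |∂u/∂x₁|)²`, since `∫ u = 1`.
As `log u` is unbounded where `u` is small, the identity is proved for the entropy integrand
evaluated at `u + δ`, and `δ → 0` by monotone convergence of the information and dominated
convergence of the entropy, with dominating function a multiple of `√u`.
-/

section

open Filter Topology ProbabilityTheory
open scoped NNReal

section Integral

variable {α : Type*} [MeasurableSpace α] {μ : Measure α}

lemma integrable_of_tendsto_of_tendsto_integral {f : ℕ → α → ℝ} {F : α → ℝ} {I : ℝ}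
    (hf : ∀ n, Integrable (f n) μ) (hf0 : ∀ n x, 0 ≤ f n x)
    (hlim : ∀ x, Tendsto (fun n => f n x) atTop (𝓝 (F x)))
    (hI : Tendsto (fun n => ∫ x, f n x ∂μ) atTop (𝓝 I)) : Integrable F μ := by
  have hnorm (n : ℕ) : ∫⁻ x, ‖f n x‖ₑ ∂μ = ENNReal.ofReal (∫ x, f n x ∂μ) := by
    rw [← ofReal_integral_norm_eq_lintegral_enorm (hf n)]
    simp only [norm_of_nonneg (hf0 n _)]
  refine ⟨aestronglyMeasurable_of_tendsto_ae _ (fun n => (hf n).1) (ae_of_all _ hlim), ?_⟩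
  calc ∫⁻ x, ‖F x‖ₑ ∂μ = ∫⁻ x, liminf (fun n => ‖f n x‖ₑ) atTop ∂μ :=
        lintegral_congr fun x => (hlim x).enorm.liminf_eq.symm
    _ ≤ liminf (fun n => ∫⁻ x, ‖f n x‖ₑ ∂μ) atTop :=
        lintegral_liminf_le' fun n => (hf n).1.enorm
    _ = ENNReal.ofReal I := by
        simp only [hnorm]
        exact (ENNReal.tendsto_ofReal hI).liminf_eq
    _ < ⊤ := ENNReal.ofReal_lt_top

lemma sq_integral_abs_le_integral_mul_integral_sq_div {u v : α → ℝ} (hu0 : ∀ x, 0 ≤ u x)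
    (hvanish : ∀ x, u x = 0 → v x = 0) (hu : Integrable u μ) (hv : Integrable v μ)
    (hvu : Integrable (fun x => v x ^ 2 / u x) μ) :
    (∫ x, |v x| ∂μ) ^ 2 ≤ (∫ x, u x ∂μ) * ∫ x, v x ^ 2 / u x ∂μ := by
  have hpointwise (a : ℝ) (x : α) : 2 * a * |v x| ≤ a ^ 2 * u x + v x ^ 2 / u x := by
    rcases (hu0 x).eq_or_lt with h | h
    · simp [← h, hvanish x h.symm]
    · have hsq : v x ^ 2 / u x * u x = |v x| ^ 2 := by rw [sq_abs]; field_simp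
      have := sq_nonneg (a * u x - |v x|)
      refine le_of_mul_le_mul_right ?_ h
      linear_combination this - hsq
  have hquadratic (a : ℝ) :
      0 ≤ (∫ x, u x ∂μ) * (a * a) + (-2 * ∫ x, |v x| ∂μ) * a + ∫ x, v x ^ 2 / u x ∂μ := by
    have := integral_mono (hv.abs.const_mul (2 * a)) ((hu.const_mul (a ^ 2)).add hvu)
      (hpointwise a)
    simp only [Pi.add_apply] at this
    rw [integral_add (hu.const_mul _) hvu, integral_const_mul, integral_const_mul] at this
    linarith
  have := discrim_le_zero hquadratic
  rw [discrim] at this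
  linarith

lemma integrable_sq_div_add {u v : α → ℝ} {M δ : ℝ} (hu : Measurable u) (hu0 : ∀ x, 0 ≤ u x)
    (hv : Integrable v μ) (hvM : ∀ x, |v x| ≤ M) (hδ : 0 < δ) :
    Integrable (fun x => v x ^ 2 / (u x + δ)) μ := by
  have hbound (x : α) : ‖v x / (u x + δ)‖ ≤ M / δ := by
    have := hu0 x
    have := (abs_nonneg _).trans (hvM x)
    rw [norm_div, norm_of_nonneg (by positivity : 0 ≤ u x + δ)]
    gcongr
    · exact hvM x
    · linarith
  have hmeas : AEStronglyMeasurable (fun x => v x / (u x + δ)) μ :=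
    (hv.1.aemeasurable.div (hu.add_const δ).aemeasurable).aestronglyMeasurable
  refine (hv.bdd_mul hmeas (ae_of_all _ hbound)).congr (ae_of_all _ fun x => ?_)
  ring

lemma integrable_of_integrable_sSup_abs_closedBall {X : Type*} [PseudoMetricSpace X]
    [MeasurableSpace X] {μ : Measure X} {g : X → ℝ} {B ρ : ℝ} (hg : AEStronglyMeasurable g μ)
    (hB : ∀ x, |g x| ≤ B) (hρ : 0 ≤ ρ)
    (hsup : Integrable (fun x => sSup ((fun z => |g z|) '' Metric.closedBall x ρ)) μ) :
    Integrable g μ := by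
  refine hsup.mono' hg (ae_of_all _ fun x => ?_)
  exact le_csSup ⟨B, Set.forall_mem_image.2 fun z _ => hB z⟩
    (Set.mem_image_of_mem _ (Metric.mem_closedBall_self hρ))

end Integral

section ShiftedNegMulLog

lemma negMulLog_le_two_mul_sqrt {u : ℝ} (hu : 0 ≤ u) : negMulLog u ≤ 2 * √u := by
  have h := negMulLog_mul (√u) (√u)
  rw [mul_self_sqrt hu] at h
  nlinarith [negMulLog_le_one_sub_self (sqrt_nonneg u), sqrt_nonneg u]

lemma negMulLog_add_le {a b : ℝ} (ha : 0 ≤ a) (hb : 0 ≤ b) :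
    negMulLog (a + b) ≤ negMulLog a + negMulLog b := by
  have h {s t : ℝ} (hs : 0 ≤ s) (ht : 0 ≤ t) : s * log s ≤ s * log (s + t) := by
    rcases hs.eq_or_lt with rfl | hs
    · simp
    · gcongr
      linarith
  simp only [negMulLog]
  linarith [h ha hb, add_comm a b ▸ h hb ha]

/-- The entropy integrand shifted by `δ` and normalised to vanish at `0`. For `δ > 0` it is smooth
on `[0, ∞)`, and it tends to `negMulLog` as `δ → 0`. -/
noncomputable def shiftedNegMulLog (δ u : ℝ) : ℝ := negMulLog (u + δ) - negMulLog δ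

variable {δ u B : ℝ}

lemma continuous_shiftedNegMulLog (δ : ℝ) : Continuous (shiftedNegMulLog δ) := by
  unfold shiftedNegMulLog
  fun_prop

lemma hasDerivAt_shiftedNegMulLog (h : u + δ ≠ 0) :
    HasDerivAt (shiftedNegMulLog δ) (-log (u + δ) - 1) u :=
  ((hasDerivAt_negMulLog h).comp_add_const u δ).sub_const _

lemma abs_neg_log_add_sub_one_le (hδ : 0 < δ) (hu : 0 ≤ u) (huB : u ≤ B) :
    |-log (u + δ) - 1| ≤ |log δ| + |log (B + δ)| + 1 := by
  have hlow : log δ ≤ log (u + δ) := log_le_log hδ (by linarith)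
  have hupp : log (u + δ) ≤ log (B + δ) := log_le_log (by linarith) (by linarith)
  have := abs_le_max_abs_abs hlow hupp
  have := max_le_add_of_nonneg (abs_nonneg (log δ)) (abs_nonneg (log (B + δ)))
  have := abs_sub (-log (u + δ)) 1
  rw [abs_neg, abs_one] at this
  linarith

lemma shiftedNegMulLog_le (hδ : 0 ≤ δ) (hu : 0 ≤ u) : shiftedNegMulLog δ u ≤ 2 * √u := by
  have := negMulLog_add_le hu hδ
  have := negMulLog_le_two_mul_sqrt hu
  unfold shiftedNegMulLog
  linarith

lemma le_shiftedNegMulLog (hδ : 0 < δ) (hδ1 : δ ≤ 1) (hu : 0 ≤ u) :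
    -(u * (u + 1)) ≤ shiftedNegMulLog δ u := by
  have hpos : 0 < u + δ := by positivity
  have hslope : δ * (log (u + δ) - log δ) ≤ u := by
    have := log_le_sub_one_of_pos (div_pos hpos hδ)
    rw [log_div hpos.ne' hδ.ne'] at this
    calc δ * (log (u + δ) - log δ) ≤ δ * ((u + δ) / δ - 1) := by gcongr
      _ = u := by field_simp; ring
  have hlog : u * log (u + δ) ≤ u * u := by
    have := log_le_sub_one_of_pos hpos
    gcongr
    linarith
  unfold shiftedNegMulLog negMulLog
  linarith

lemma abs_shiftedNegMulLog_le (hδ : 0 < δ) (hδ1 : δ ≤ 1) (hu : 0 ≤ u) (huB : u ≤ B) :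
    |shiftedNegMulLog δ u| ≤ (2 + √B * (B + 1)) * √u := by
  have hsqrt : √u ≤ √B := sqrt_le_sqrt huB
  have hmul : u * (u + 1) ≤ √B * (B + 1) * √u := by
    nth_rewrite 1 [← mul_self_sqrt hu]
    calc √u * √u * (u + 1) ≤ √B * √u * (B + 1) := by gcongr
      _ = √B * (B + 1) * √u := by ring
  have hB : 0 ≤ √B * (B + 1) * √u := by have := hu.trans huB; positivity
  have := sqrt_nonneg u
  have := shiftedNegMulLog_le hδ.le hu
  have := le_shiftedNegMulLog hδ hδ1 hu
  rw [abs_le]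
  constructor <;> linarith

variable {α : Type*} [MeasurableSpace α] {μ : Measure α} {w : α → ℝ}

lemma integrable_neg_log_add_sub_one_mul {g : α → ℝ} (hw : Measurable w) (hw0 : ∀ x, 0 ≤ w x)
    (hwB : ∀ x, w x ≤ B) (hg : Integrable g μ) (hδ : 0 < δ) :
    Integrable (fun x => (-log (w x + δ) - 1) * g x) μ :=
  hg.bdd_mul (by fun_prop : Measurable fun x => -log (w x + δ) - 1).aestronglyMeasurable
    (ae_of_all _ fun x => abs_neg_log_add_sub_one_le hδ (hw0 x) (hwB x))

lemma integrable_shiftedNegMulLog_comp (hw : Measurable w) (hw0 : ∀ x, 0 ≤ w x)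
    (hwB : ∀ x, w x ≤ B) (hsqrt : Integrable (fun x => √(w x)) μ) (hδ : 0 < δ) (hδ1 : δ ≤ 1) :
    Integrable (fun x => shiftedNegMulLog δ (w x)) μ :=
  (hsqrt.const_mul _).mono'
    ((continuous_shiftedNegMulLog δ).measurable.comp hw).aestronglyMeasurable
    (ae_of_all _ fun x => abs_shiftedNegMulLog_le hδ hδ1 (hw0 x) (hwB x))

lemma tendsto_integral_shiftedNegMulLog_comp (hw : Measurable w) (hw0 : ∀ x, 0 ≤ w x)
    (hwB : ∀ x, w x ≤ B) (hsqrt : Integrable (fun x => √(w x)) μ) {δ : ℕ → ℝ}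
    (hδ : ∀ n, 0 < δ n) (hδ1 : ∀ n, δ n ≤ 1) (hlim : Tendsto δ atTop (𝓝 0)) :
    Tendsto (fun n => ∫ x, shiftedNegMulLog (δ n) (w x) ∂μ) atTop
      (𝓝 (∫ x, negMulLog (w x) ∂μ)) := by
  refine tendsto_integral_of_dominated_convergence _
    (fun n => (integrable_shiftedNegMulLog_comp hw hw0 hwB hsqrt (hδ n) (hδ1 n)).1)
    (hsqrt.const_mul (2 + √B * (B + 1)))
    (fun n => ae_of_all _ fun x => abs_shiftedNegMulLog_le (hδ n) (hδ1 n) (hw0 x) (hwB x))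
    (ae_of_all _ fun x => ?_)
  have hcont : Continuous fun t => shiftedNegMulLog t (w x) := by
    unfold shiftedNegMulLog
    fun_prop
  simpa [shiftedNegMulLog, Function.comp_def] using (hcont.tendsto 0).comp hlim

end ShiftedNegMulLog

section Gaussian

lemma integrable_gaussianReal_of_lipschitzWith {g : ℝ → ℝ} {L : ℝ≥0} (hg : LipschitzWith L g)
    (m : ℝ) (v : ℝ≥0) : Integrable g (gaussianReal m v) := by
  have hid : Integrable id (gaussianReal m v) := (memLp_id_gaussianReal 1).integrable le_rfl
  refine ((integrable_const |g 0|).add (hid.norm.const_mul L)).mono'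
    hg.continuous.aestronglyMeasurable (ae_of_all _ fun z => ?_)
  have hlip := hg.norm_sub_le z 0
  rw [sub_zero] at hlip
  have := norm_add_le (g 0) (g z - g 0)
  rw [add_sub_cancel] at this
  exact this.trans (by simpa using hlip)

section Stein

variable {m : ℝ} {v : ℝ≥0}

lemma integrable_mul_gaussianPDFReal {g : ℝ → ℝ} (hv : v ≠ 0)
    (hg : Integrable g (gaussianReal m v)) : Integrable fun z => g z * gaussianPDFReal m v z := by
  rw [gaussianReal_of_var_ne_zero _ hv, integrable_withDensity_iff
    (measurable_gaussianPDF _ _) (ae_of_all _ fun _ => gaussianPDF_lt_top)] at hg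
  simpa only [toReal_gaussianPDF] using hg

lemma hasDerivAt_gaussianPDFReal (m : ℝ) (v : ℝ≥0) (z : ℝ) :
    HasDerivAt (gaussianPDFReal m v) (-((z - m) / v * gaussianPDFReal m v z)) z := by
  have hexponent : HasDerivAt (fun z : ℝ => -(z - m) ^ 2 / (2 * v)) (-((z - m) / v)) z := by
    refine (((hasDerivAt_id z).sub_const m).pow 2).neg.div_const _ |>.congr_deriv ?_
    simp only [id, Nat.cast_ofNat, mul_one, Nat.add_one_sub_one, pow_one, neg_div]
    rw [mul_div_mul_left _ _ two_ne_zero]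
  rw [gaussianPDFReal_def]
  exact (hexponent.exp.const_mul _).congr_deriv (by ring)

lemma integral_sub_mul_gaussianReal_eq_mul_integral_deriv {g g' : ℝ → ℝ} (hv : v ≠ 0)
    (hg : ∀ z, HasDerivAt g (g' z) z) (hgi : Integrable g (gaussianReal m v))
    (hg'i : Integrable g' (gaussianReal m v))
    (hzg : Integrable (fun z => (z - m) * g z) (gaussianReal m v)) :
    ∫ z, (z - m) * g z ∂gaussianReal m v = v * ∫ z, g' z ∂gaussianReal m v := by
  have hv' : (v : ℝ) ≠ 0 := NNReal.coe_ne_zero.2 hv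
  have hparts := integral_mul_deriv_eq_deriv_mul_of_integrable (fun z _ => hg z)
    (fun z _ => hasDerivAt_gaussianPDFReal m v z)
    (((integrable_mul_gaussianPDFReal hv hzg).div_const v).neg.congr
      (ae_of_all _ fun z => by simp only [Pi.neg_apply, Pi.mul_apply]; ring))
    (integrable_mul_gaussianPDFReal hv hg'i) (integrable_mul_gaussianPDFReal hv hgi)
  simp only [integral_gaussianReal_eq_integral_smul hv, smul_eq_mul]
  calc ∫ z, gaussianPDFReal m v z * ((z - m) * g z)
      = -v * ∫ z, g z * -((z - m) / v * gaussianPDFReal m v z) := by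
        rw [← integral_const_mul]
        congr with z
        field_simp
    _ = v * ∫ z, gaussianPDFReal m v z * g' z := by
        rw [hparts, neg_mul_neg]
        simp only [mul_comm (g' _)]

end Stein

variable {φ φ' φ'' : ℝ → ℝ} {L M : ℝ≥0}

lemma hasDerivAt_integral_comp_mul_gaussianReal (hφ : ∀ t, HasDerivAt φ (φ' t) t)
    (hφL : LipschitzWith L φ) (s : ℝ) :
    HasDerivAt (fun s => ∫ z, φ (s * z) ∂gaussianReal 0 1)
      (∫ z, z * φ' (s * z) ∂gaussianReal 0 1) s := by
  have hderiv : deriv φ = φ' := funext fun t => (hφ t).deriv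
  have hmeas : Measurable φ' := hderiv ▸ measurable_deriv φ
  have hbound (t : ℝ) : ‖φ' t‖ ≤ L := hderiv ▸ norm_deriv_le_of_lipschitz hφL
  have hid : Integrable id (gaussianReal 0 1) := (memLp_id_gaussianReal 1).integrable le_rfl
  refine (hasDerivAt_integral_of_dominated_loc_of_deriv_le (F := fun s z => φ (s * z))
    (F' := fun s z => z * φ' (s * z)) (bound := fun z => ‖z‖ * L) univ_mem
    (.of_forall fun s => ?_) ?_ ?_ (ae_of_all _ fun z t _ => ?_) (hid.norm.mul_const _)
    (ae_of_all _ fun z t _ => ?_)).2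
  · exact (hφL.continuous.comp (by fun_prop)).aestronglyMeasurable
  · exact integrable_gaussianReal_of_lipschitzWith (hφL.comp (lipschitzWith_smul s)) 0 1
  · exact Measurable.aestronglyMeasurable (by fun_prop)
  · rw [norm_mul]
    gcongr
    exact hbound _
  · exact ((hφ (t * z)).comp t (hasDerivAt_mul_const z)).congr_deriv (mul_comm _ _)

lemma hasDerivAt_integral_comp_mul_gaussianReal_of_hasDerivAt_deriv
    (hφ : ∀ t, HasDerivAt φ (φ' t) t) (hφ' : ∀ t, HasDerivAt φ' (φ'' t) t)
    (hφL : LipschitzWith L φ) (hφ'L : LipschitzWith M φ') (s : ℝ) :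
    HasDerivAt (fun s => ∫ z, φ (s * z) ∂gaussianReal 0 1)
      (s * ∫ z, φ'' (s * z) ∂gaussianReal 0 1) s := by
  have hderiv' : deriv φ' = φ'' := funext fun t => (hφ' t).deriv
  have hbound (t : ℝ) : ‖φ' t‖ ≤ L := (hφ t).deriv ▸ norm_deriv_le_of_lipschitz hφL
  have hbound' (t : ℝ) : ‖φ'' t‖ ≤ M := hderiv' ▸ norm_deriv_le_of_lipschitz hφ'L
  have hmeas' : Measurable φ'' := hderiv' ▸ measurable_deriv φ'
  have hid : Integrable id (gaussianReal 0 1) := (memLp_id_gaussianReal 1).integrable le_rfl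
  have hφ's (z : ℝ) : HasDerivAt (fun z => φ' (s * z)) (s * φ'' (s * z)) z :=
    ((hφ' (s * z)).comp z (hasDerivAt_const_mul s)).congr_deriv (mul_comm _ _)
  have hstein := integral_sub_mul_gaussianReal_eq_mul_integral_deriv (m := 0) one_ne_zero hφ's
  simp only [sub_zero, NNReal.coe_one, one_mul] at hstein
  rw [← integral_const_mul, ← hstein]
  · exact hasDerivAt_integral_comp_mul_gaussianReal hφ hφL s
  · exact integrable_gaussianReal_of_lipschitzWith (hφ'L.comp (lipschitzWith_smul s)) 0 1
  · exact (Integrable.of_bound (Measurable.aestronglyMeasurable (by fun_prop)) M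
      (ae_of_all _ fun z => hbound' _)).const_mul s
  · exact hid.mul_bdd (hφ'L.continuous.comp (by fun_prop)).aestronglyMeasurable
      (ae_of_all _ fun z => hbound _)

end Gaussian

section Landau

lemma abs_deriv_le_abs_add_abs_add_integral {φ φ' φ'' : ℝ → ℝ}
    (hφ : ∀ t, HasDerivAt φ (φ' t) t) (hφ' : ∀ t, HasDerivAt φ' (φ'' t) t)
    (hint : IntegrableOn φ'' (Set.Ioc 0 1)) :
    |φ' 0| ≤ |φ 0| + |φ 1| + ∫ t in Set.Ioc 0 1, |φ'' t| := by
  have hint' : IntervalIntegrable (fun t => (1 - t) * φ'' t) volume 0 1 :=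
    ((intervalIntegrable_iff_integrableOn_Ioc_of_le zero_le_one).2 hint).continuousOn_mul
      (by fun_prop)
  have htaylor : φ 1 - φ 0 - φ' 0 = ∫ t in Set.Ioc 0 1, (1 - t) * φ'' t := by
    rw [← intervalIntegral.integral_of_le zero_le_one,
      intervalIntegral.integral_eq_sub_of_hasDerivAt (f := fun t => (1 - t) * φ' t + φ t)
        (fun t _ => ?_) hint']
    · ring
    · exact ((((hasDerivAt_id t).const_sub 1).mul (hφ' t)).add (hφ t)).congr_deriv (by simp)
  have hremainder : |φ 1 - φ 0 - φ' 0| ≤ ∫ t in Set.Ioc 0 1, |φ'' t| := by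
    rw [htaylor, ← norm_eq_abs]
    refine norm_integral_le_of_norm_le hint.abs ?_
    filter_upwards [ae_restrict_mem measurableSet_Ioc] with t ht
    rw [norm_mul, norm_eq_abs, norm_eq_abs]
    exact mul_le_of_le_one_left (abs_nonneg _) (abs_le.2 ⟨by linarith [ht.2], by linarith [ht.1]⟩)
  have := abs_sub (φ 1 - φ 0) (φ 1 - φ 0 - φ' 0)
  rw [sub_sub_cancel] at this
  linarith [abs_sub (φ 1) (φ 0)]

end Landau

section DirectionalDerivative

variable {E : Type*} [NormedAddCommGroup E] [NormedSpace ℝ E]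

/-- The directional derivative `∂f/∂e`, as an operator on functions so that it can be iterated. -/
noncomputable def dirDeriv (e : E) (f : E → ℝ) (x : E) : ℝ := fderiv ℝ f x e

variable {e x : E} {f : E → ℝ} {L : ℝ≥0}

lemma measurable_dirDeriv [MeasurableSpace E] [OpensMeasurableSpace E] (e : E) (f : E → ℝ) :
    Measurable (dirDeriv e f) :=
  measurable_fderiv_apply_const ℝ f e

lemma abs_dirDeriv_le (hL : LipschitzWith L f) (e x : E) : |dirDeriv e f x| ≤ L * ‖e‖ :=
  ((fderiv ℝ f x).le_opNorm e).trans (by gcongr; exact norm_fderiv_le_of_lipschitz ℝ hL)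

lemma dirDeriv_eq_zero_of_nonneg (hf : ∀ x, 0 ≤ f x) (hx : f x = 0) (e : E) :
    dirDeriv e f x = 0 := by
  have hmin : IsLocalMin f x := .of_forall fun z => hx ▸ hf z
  rw [dirDeriv, hmin.fderiv_eq_zero, zero_apply]

lemma lipschitzWith_comp_sub_smul (hL : LipschitzWith L f) (e x : E) :
    LipschitzWith (L * ‖e‖₊) fun t : ℝ => f (x - t • e) := by
  refine hL.comp (LipschitzWith.of_dist_le_mul fun s t => ?_)
  rw [dist_sub_left, dist_eq_norm, dist_eq_norm, ← sub_smul, norm_smul, mul_comm, coe_nnnorm]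

lemma hasDerivAt_comp_sub_smul (hf : Differentiable ℝ f) (e x : E) (t : ℝ) :
    HasDerivAt (fun t : ℝ => f (x - t • e)) (-dirDeriv e f (x - t • e)) t := by
  have hline : HasDerivAt (fun t : ℝ => x - t • e) (-e) t := by
    simpa using ((hasDerivAt_id t).smul_const e).const_sub x
  exact ((hf _).hasFDerivAt.comp_hasDerivAt t hline).congr_deriv (map_neg _ _)

lemma hasDerivAt_neg_dirDeriv_comp_sub_smul (hf' : Differentiable ℝ (dirDeriv e f)) (x : E)
    (t : ℝ) :
    HasDerivAt (fun t : ℝ => -dirDeriv e f (x - t • e))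
      (dirDeriv e (dirDeriv e f) (x - t • e)) t :=
  (hasDerivAt_comp_sub_smul hf' e x t).neg.congr_deriv (neg_neg _)

variable [FiniteDimensional ℝ E] [MeasurableSpace E] [BorelSpace E] {μ : Measure E}
  [μ.IsAddHaarMeasure]

lemma integrable_comp_sub_smul {α : Type*} [MeasurableSpace α] {ν : Measure α} [IsFiniteMeasure ν]
    {c : α → ℝ} (hc : Measurable c) {g : E → ℝ} (hg : Integrable g μ) (e : E) :
    Integrable (fun p : α × E => g (p.2 - c p.1 • e)) (ν.prod μ) := by
  have hshear : MeasurePreserving (fun p : α × E => (p.1, p.2 - c p.1 • e)) (ν.prod μ)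
      (ν.prod μ) :=
    (MeasurePreserving.id ν).skew_product (g := fun a x => x - c a • e) (by fun_prop)
      (ae_of_all _ fun a => (measurePreserving_sub_right μ (c a • e)).map_eq)
  exact hshear.integrable_comp_of_integrable (hg.comp_snd ν)

lemma integrable_dirDeriv (hf : Differentiable ℝ f) (hf' : Differentiable ℝ (dirDeriv e f))
    (hfi : Integrable f μ) (hf''i : Integrable (dirDeriv e (dirDeriv e f)) μ) :
    Integrable (dirDeriv e f) μ := by
  have hjoint : Integrable (fun p : ℝ × E => dirDeriv e (dirDeriv e f) (p.2 - p.1 • e))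
      ((volume.restrict (Set.Ioc 0 1)).prod μ) :=
    integrable_comp_sub_smul measurable_id hf''i e
  refine ((hfi.abs.add (hfi.comp_sub_right e).abs).add hjoint.abs.integral_prod_right).mono'
    (measurable_dirDeriv e f).aestronglyMeasurable ?_
  filter_upwards [hjoint.prod_left_ae] with x hx
  simpa using abs_deriv_le_abs_add_abs_add_integral (hasDerivAt_comp_sub_smul hf e x)
    (hasDerivAt_neg_dirDeriv_comp_sub_smul hf' x) hx

end DirectionalDerivative

section GaussianSmoothing

variable {E : Type*} [NormedAddCommGroup E] [NormedSpace ℝ E] {e : E} {y : ℝ} {f g : E → ℝ}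
  {L M : ℝ≥0} {B : ℝ}

/-- The convolution of `f` with the centred Gaussian law of covariance `y • e eᵀ`, written as the
expectation of `f (x - √y Z • e)` for a standard normal `Z`. This makes sense at `y = 0` too. -/
noncomputable def gaussianSmoothing (e : E) (y : ℝ) (f : E → ℝ) (x : E) : ℝ :=
  ∫ z, f (x - (√y * z) • e) ∂gaussianReal 0 1

lemma gaussianSmoothing_zero (e : E) (f : E → ℝ) : gaussianSmoothing e 0 f = f := by
  ext x
  simp [gaussianSmoothing]

lemma gaussianSmoothing_nonneg (hf : ∀ x, 0 ≤ f x) (e : E) (y : ℝ) (x : E) :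
    0 ≤ gaussianSmoothing e y f x :=
  integral_nonneg fun _ => hf _

lemma integrable_gaussianReal_comp_sub_smul (hL : LipschitzWith L f) (e : E) (y : ℝ) (x : E) :
    Integrable (fun z => f (x - (√y * z) • e)) (gaussianReal 0 1) :=
  integrable_gaussianReal_of_lipschitzWith
    ((lipschitzWith_comp_sub_smul hL e x).comp (lipschitzWith_smul √y)) 0 1

lemma gaussianSmoothing_le (hL : LipschitzWith L f) (hB : ∀ x, f x ≤ B) (e : E) (y : ℝ) (x : E) :
    gaussianSmoothing e y f x ≤ B := by
  simpa [gaussianSmoothing] using integral_mono (integrable_gaussianReal_comp_sub_smul hL e y x)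
    (integrable_const B) fun z => hB _

lemma lipschitzWith_gaussianSmoothing (hL : LipschitzWith L f) (e : E) (y : ℝ) :
    LipschitzWith L (gaussianSmoothing e y f) := by
  refine LipschitzWith.of_dist_le_mul fun x x' => ?_
  rw [dist_eq_norm, gaussianSmoothing, gaussianSmoothing,
    ← integral_sub (integrable_gaussianReal_comp_sub_smul hL e y x)
      (integrable_gaussianReal_comp_sub_smul hL e y x')]
  refine (norm_integral_le_of_norm_le_const (C := L * dist x x') (ae_of_all _ fun z => ?_)).trans
    (by simp)
  rw [← dist_eq_norm]
  simpa using hL.dist_le_mul (x - (√y * z) • e) (x' - (√y * z) • e)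

lemma continuous_gaussianSmoothing_variance (hf : Differentiable ℝ f) (hL : LipschitzWith L f)
    (e x : E) : Continuous fun y => gaussianSmoothing e y f x := by
  have hdiff : Differentiable ℝ fun s => ∫ z, f (x - (s * z) • e) ∂gaussianReal 0 1 := fun s =>
    (hasDerivAt_integral_comp_mul_gaussianReal (hasDerivAt_comp_sub_smul hf e x)
      (lipschitzWith_comp_sub_smul hL e x) s).differentiableAt
  exact hdiff.continuous.comp continuous_sqrt

lemma hasDerivAt_gaussianSmoothing_variance (hf : Differentiable ℝ f)
    (hf' : Differentiable ℝ (dirDeriv e f)) (hL : LipschitzWith L f)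
    (hM : LipschitzWith M (dirDeriv e f)) (x : E) (hy : 0 < y) :
    HasDerivAt (fun y => gaussianSmoothing e y f x)
      (1 / 2 * gaussianSmoothing e y (dirDeriv e (dirDeriv e f)) x) y := by
  have hs := hasDerivAt_integral_comp_mul_gaussianReal_of_hasDerivAt_deriv
    (hasDerivAt_comp_sub_smul hf e x) (hasDerivAt_neg_dirDeriv_comp_sub_smul hf' x)
    (lipschitzWith_comp_sub_smul hL e x) (lipschitzWith_comp_sub_smul hM e x).neg √y
  refine (hs.comp y (hasDerivAt_sqrt hy.ne')).congr_deriv ?_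
  rw [gaussianSmoothing]
  field_simp

variable [FiniteDimensional ℝ E] [MeasurableSpace E] [BorelSpace E]

lemma hasFDerivAt_gaussianSmoothing (hf : Differentiable ℝ f) (hL : LipschitzWith L f) (e : E)
    (y : ℝ) (x : E) :
    HasFDerivAt (gaussianSmoothing e y f)
      (∫ z, fderiv ℝ f (x - (√y * z) • e) ∂gaussianReal 0 1) x := by
  refine (hasFDerivAt_integral_of_dominated_loc_of_lip' (bound := fun _ => (L : ℝ)) univ_mem
    (fun x' _ => ?_) (integrable_gaussianReal_comp_sub_smul hL e y x) ?_
    (ae_of_all _ fun z x' _ => ?_) (integrable_const _) (ae_of_all _ fun z => ?_)).2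
  · exact (integrable_gaussianReal_comp_sub_smul hL e y x').1
  · exact ((measurable_fderiv ℝ f).comp (by fun_prop)).aestronglyMeasurable
  · simpa using hL.norm_sub_le (x' - (√y * z) • e) (x - (√y * z) • e)
  · exact (hf _).hasFDerivAt.comp x ((hasFDerivAt_id x).sub_const _)

lemma differentiable_gaussianSmoothing (hf : Differentiable ℝ f) (hL : LipschitzWith L f) (e : E)
    (y : ℝ) : Differentiable ℝ (gaussianSmoothing e y f) := fun x =>
  (hasFDerivAt_gaussianSmoothing hf hL e y x).differentiableAt

lemma dirDeriv_gaussianSmoothing (hf : Differentiable ℝ f) (hL : LipschitzWith L f) (e : E)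
    (y : ℝ) : dirDeriv e (gaussianSmoothing e y f) = gaussianSmoothing e y (dirDeriv e f) := by
  ext x
  have hint : Integrable (fun z => fderiv ℝ f (x - (√y * z) • e)) (gaussianReal 0 1) :=
    Integrable.of_bound ((measurable_fderiv ℝ f).comp (by fun_prop)).aestronglyMeasurable L
      (ae_of_all _ fun z => norm_fderiv_le_of_lipschitz ℝ hL)
  rw [dirDeriv, (hasFDerivAt_gaussianSmoothing hf hL e y x).fderiv,
    ContinuousLinearMap.integral_apply hint]
  rfl

lemma measurable_gaussianSmoothing (hg : Measurable g) (e : E) :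
    Measurable fun p : ℝ × E => gaussianSmoothing e p.1 g p.2 := by
  have : StronglyMeasurable fun q : (ℝ × E) × ℝ => g (q.1.2 - (√q.1.1 * q.2) • e) :=
    (hg.comp (by fun_prop)).stronglyMeasurable
  exact this.integral_prod_right.measurable

variable {μ : Measure E} [μ.IsAddHaarMeasure]

lemma integrable_prod_gaussianReal_comp_sub_smul (hg : Integrable g μ) (e : E) (y : ℝ) :
    Integrable (fun p : ℝ × E => g (p.2 - (√y * p.1) • e)) ((gaussianReal 0 1).prod μ) :=
  integrable_comp_sub_smul (measurable_const_mul √y) hg e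

lemma integrable_gaussianSmoothing (hg : Integrable g μ) (e : E) (y : ℝ) :
    Integrable (gaussianSmoothing e y g) μ :=
  (integrable_prod_gaussianReal_comp_sub_smul hg e y).integral_prod_right

lemma integral_gaussianSmoothing (hg : Integrable g μ) (e : E) (y : ℝ) :
    ∫ x, gaussianSmoothing e y g x ∂μ = ∫ x, g x ∂μ := by
  simp only [gaussianSmoothing]
  rw [← integral_integral_swap (integrable_prod_gaussianReal_comp_sub_smul hg e y)]
  simp [integral_sub_right_eq_self]

lemma integral_abs_gaussianSmoothing_le (hg : Integrable g μ) (e : E) (y : ℝ) :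
    ∫ x, |gaussianSmoothing e y g x| ∂μ ≤ ∫ x, |g x| ∂μ := by
  rw [← integral_gaussianSmoothing hg.abs e y]
  exact integral_mono (integrable_gaussianSmoothing hg e y).abs
    (integrable_gaussianSmoothing hg.abs e y) fun x => abs_integral_le_integral_abs

lemma integrable_prod_gaussianSmoothing (hgm : Measurable g) (hg : Integrable g μ) (e : E)
    (ν : Measure ℝ) [IsFiniteMeasure ν] :
    Integrable (fun p : ℝ × E => gaussianSmoothing e p.1 g p.2) (ν.prod μ) := by
  have hmeas := (measurable_gaussianSmoothing hgm e).stronglyMeasurable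
  refine (integrable_prod_iff hmeas.aestronglyMeasurable).2
    ⟨ae_of_all _ fun y => integrable_gaussianSmoothing hg e y, ?_⟩
  refine Integrable.of_bound hmeas.norm.integral_prod_right.aestronglyMeasurable
    (∫ x, |g x| ∂μ) (ae_of_all _ fun y => ?_)
  rw [norm_of_nonneg (integral_nonneg fun _ => norm_nonneg _)]
  exact integral_abs_gaussianSmoothing_le hg e y

end GaussianSmoothing

section DeBruijn

variable {E : Type*} [NormedAddCommGroup E] [NormedSpace ℝ E] {e : E} {f u : E → ℝ} {δ r : ℝ}

/-- The integrand of the Fisher information of `u` in the direction `e`, with the denominator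
shifted by `δ`. At `δ = 0` the junk value `0` where `u` vanishes is the right one for `u ≥ 0`,
since the derivative of `u` vanishes there as well. -/
noncomputable def fisherDensity (e : E) (δ : ℝ) (u : E → ℝ) (x : E) : ℝ :=
  dirDeriv e u x ^ 2 / (u x + δ)

lemma fisherDensity_nonneg (hu : ∀ x, 0 ≤ u x) (hδ : 0 ≤ δ) (e x : E) :
    0 ≤ fisherDensity e δ u x :=
  div_nonneg (sq_nonneg _) (add_nonneg (hu x) hδ)

lemma fisherDensity_anti (hu : ∀ x, 0 ≤ u x) {δ' : ℝ} (hδ : 0 < δ) (h : δ ≤ δ') (e x : E) :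
    fisherDensity e δ' u x ≤ fisherDensity e δ u x := by
  have := hu x
  unfold fisherDensity
  gcongr

lemma tendsto_fisherDensity (hu : ∀ x, 0 ≤ u x) {δ : ℕ → ℝ} (hδ : Tendsto δ atTop (𝓝 0))
    (e x : E) :
    Tendsto (fun n => fisherDensity e (δ n) u x) atTop (𝓝 (fisherDensity e 0 u x)) := by
  unfold fisherDensity
  rcases eq_or_ne (u x) 0 with hx | hx
  · simp [dirDeriv_eq_zero_of_nonneg hu hx]
  · exact tendsto_const_nhds.div (hδ.const_add (u x)) (by simpa using hx)

variable [MeasurableSpace E]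

/-- The nonnegative functions for which the entropy of `gaussianSmoothing e y f` can be
differentiated in `y`. The class is stable under `gaussianSmoothing e y`. -/
structure RegularAlong (e : E) (f : E → ℝ) (μ : Measure E) : Prop where
  nonneg : ∀ x, 0 ≤ f x
  bddAbove : ∃ B, ∀ x, f x ≤ B
  differentiable : Differentiable ℝ f
  lipschitz : ∃ L, LipschitzWith L f
  differentiable_dirDeriv : Differentiable ℝ (dirDeriv e f)
  lipschitz_dirDeriv : ∃ L, LipschitzWith L (dirDeriv e f)
  integrable : Integrable f μ
  integrable_dirDeriv_dirDeriv : Integrable (dirDeriv e (dirDeriv e f)) μ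

namespace RegularAlong

variable [FiniteDimensional ℝ E] [BorelSpace E] {μ : Measure E}

lemma dirDeriv_smoothing (h : RegularAlong e f μ) (y : ℝ) :
    dirDeriv e (gaussianSmoothing e y f) = gaussianSmoothing e y (dirDeriv e f) :=
  h.lipschitz.elim fun _ hL => dirDeriv_gaussianSmoothing h.differentiable hL e y

lemma dirDeriv_dirDeriv_smoothing (h : RegularAlong e f μ) (y : ℝ) :
    dirDeriv e (dirDeriv e (gaussianSmoothing e y f)) =
      gaussianSmoothing e y (dirDeriv e (dirDeriv e f)) := by
  obtain ⟨M, hM⟩ := h.lipschitz_dirDeriv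
  rw [h.dirDeriv_smoothing, dirDeriv_gaussianSmoothing h.differentiable_dirDeriv hM]

lemma setIntegral_mul_dirDeriv_dirDeriv_smoothing (h : RegularAlong e f μ) (hδ : 0 < δ)
    (hr : 0 ≤ r) {x : E}
    (hint : IntegrableOn (fun y => (-log (gaussianSmoothing e y f x + δ) - 1) *
      dirDeriv e (dirDeriv e (gaussianSmoothing e y f)) x) (Set.Ioo 0 r)) :
    ∫ y in Set.Ioo 0 r, (-log (gaussianSmoothing e y f x + δ) - 1) *
        dirDeriv e (dirDeriv e (gaussianSmoothing e y f)) x =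
      2 * (shiftedNegMulLog δ (gaussianSmoothing e r f x) - shiftedNegMulLog δ (f x)) := by
  obtain ⟨L, hL⟩ := h.lipschitz
  obtain ⟨M, hM⟩ := h.lipschitz_dirDeriv
  have hcont : Continuous fun y => 2 * shiftedNegMulLog δ (gaussianSmoothing e y f x) :=
    ((continuous_shiftedNegMulLog δ).comp
      (continuous_gaussianSmoothing_variance h.differentiable hL e x)).const_mul 2
  have hderiv (y : ℝ) (hy : y ∈ Set.Ioo 0 r) :
      HasDerivAt (fun y => 2 * shiftedNegMulLog δ (gaussianSmoothing e y f x))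
        ((-log (gaussianSmoothing e y f x + δ) - 1) *
          dirDeriv e (dirDeriv e (gaussianSmoothing e y f)) x) y := by
    have hne : gaussianSmoothing e y f x + δ ≠ 0 :=
      (add_pos_of_nonneg_of_pos (gaussianSmoothing_nonneg h.nonneg e y x) hδ).ne'
    have hheat := hasDerivAt_gaussianSmoothing_variance h.differentiable
      h.differentiable_dirDeriv hL hM x hy.1
    refine (((hasDerivAt_shiftedNegMulLog hne).comp y hheat).const_mul 2).congr_deriv ?_
    rw [h.dirDeriv_dirDeriv_smoothing]
    ring
  rw [← integral_Ioc_eq_integral_Ioo, ← intervalIntegral.integral_of_le hr,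
    intervalIntegral.integral_eq_sub_of_hasDerivAt_of_le hr hcont.continuousOn hderiv
      ((intervalIntegrable_iff_integrableOn_Ioo_of_le hr).2 hint),
    gaussianSmoothing_zero, mul_sub]

variable [μ.IsAddHaarMeasure]

lemma smoothing (h : RegularAlong e f μ) (y : ℝ) :
    RegularAlong e (gaussianSmoothing e y f) μ := by
  obtain ⟨B, hB⟩ := h.bddAbove
  obtain ⟨L, hL⟩ := h.lipschitz
  obtain ⟨M, hM⟩ := h.lipschitz_dirDeriv
  have hdir := h.dirDeriv_smoothing y
  exact {
    nonneg := gaussianSmoothing_nonneg h.nonneg e y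
    bddAbove := ⟨B, gaussianSmoothing_le hL hB e y⟩
    differentiable := differentiable_gaussianSmoothing h.differentiable hL e y
    lipschitz := ⟨L, lipschitzWith_gaussianSmoothing hL e y⟩
    differentiable_dirDeriv :=
      hdir ▸ differentiable_gaussianSmoothing h.differentiable_dirDeriv hM e y
    lipschitz_dirDeriv := ⟨M, hdir ▸ lipschitzWith_gaussianSmoothing hM e y⟩
    integrable := integrable_gaussianSmoothing h.integrable e y
    integrable_dirDeriv_dirDeriv := h.dirDeriv_dirDeriv_smoothing y ▸
      integrable_gaussianSmoothing h.integrable_dirDeriv_dirDeriv e y }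

protected lemma integrable_dirDeriv (h : RegularAlong e f μ) : Integrable (dirDeriv e f) μ :=
  integrable_dirDeriv h.differentiable h.differentiable_dirDeriv h.integrable
    h.integrable_dirDeriv_dirDeriv

lemma integrable_fisherDensity (h : RegularAlong e f μ) (hδ : 0 < δ) :
    Integrable (fisherDensity e δ f) μ := by
  obtain ⟨L, hL⟩ := h.lipschitz
  exact integrable_sq_div_add h.differentiable.continuous.measurable h.nonneg
    h.integrable_dirDeriv (abs_dirDeriv_le hL e) hδ

lemma integral_mul_dirDeriv_dirDeriv (h : RegularAlong e f μ) (hδ : 0 < δ) :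
    ∫ x, (-log (f x + δ) - 1) * dirDeriv e (dirDeriv e f) x ∂μ =
      ∫ x, fisherDensity e δ f x ∂μ := by
  obtain ⟨B, hB⟩ := h.bddAbove
  have hmeas := h.differentiable.continuous.measurable
  have hlog (x : E) : HasFDerivAt (fun x => -log (f x + δ) - 1)
      (-((f x + δ)⁻¹ • fderiv ℝ f x)) x :=
    (((h.differentiable x).hasFDerivAt.add_const δ).log
      (add_pos_of_nonneg_of_pos (h.nonneg x) hδ).ne').neg.sub_const 1
  have hfisher (x : E) :
      fderiv ℝ (fun x => -log (f x + δ) - 1) x e * dirDeriv e f x = -fisherDensity e δ f x := by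
    rw [(hlog x).fderiv]
    simp only [neg_apply, smul_apply, smul_eq_mul, fisherDensity, dirDeriv]
    ring
  have hparts := integral_mul_fderiv_eq_neg_fderiv_mul_of_integrable (v := e)
    ((h.integrable_fisherDensity hδ).neg.congr (ae_of_all _ fun x => (hfisher x).symm))
    (integrable_neg_log_add_sub_one_mul hmeas h.nonneg hB h.integrable_dirDeriv_dirDeriv hδ)
    (integrable_neg_log_add_sub_one_mul hmeas h.nonneg hB h.integrable_dirDeriv hδ)
    (fun x _ => (hlog x).differentiableAt) (fun x _ => h.differentiable_dirDeriv x)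
  simp only [hfisher, integral_neg, neg_neg] at hparts
  exact hparts

lemma integrable_prod_fisherDensity (h : RegularAlong e f μ) (hδ : 0 < δ) (ν : Measure ℝ)
    [IsFiniteMeasure ν] :
    Integrable (fun p : ℝ × E => fisherDensity e δ (gaussianSmoothing e p.1 f) p.2)
      (ν.prod μ) := by
  obtain ⟨L, hL⟩ := h.lipschitz
  simp only [fisherDensity, h.dirDeriv_smoothing]
  refine integrable_sq_div_add (M := L * ‖e‖)
    (measurable_gaussianSmoothing h.differentiable.continuous.measurable e)
    (fun p => gaussianSmoothing_nonneg h.nonneg e p.1 p.2)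
    (integrable_prod_gaussianSmoothing (measurable_dirDeriv e f) h.integrable_dirDeriv e ν)
    (fun p => ?_) hδ
  rw [← h.dirDeriv_smoothing]
  exact abs_dirDeriv_le (lipschitzWith_gaussianSmoothing hL e p.1) e p.2

lemma integrable_prod_mul_dirDeriv_dirDeriv (h : RegularAlong e f μ) (hδ : 0 < δ) (ν : Measure ℝ)
    [IsFiniteMeasure ν] :
    Integrable (fun p : ℝ × E => (-log (gaussianSmoothing e p.1 f p.2 + δ) - 1) *
      dirDeriv e (dirDeriv e (gaussianSmoothing e p.1 f)) p.2) (ν.prod μ) := by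
  obtain ⟨B, hB⟩ := h.bddAbove
  obtain ⟨L, hL⟩ := h.lipschitz
  simp only [h.dirDeriv_dirDeriv_smoothing]
  exact integrable_neg_log_add_sub_one_mul
    (measurable_gaussianSmoothing h.differentiable.continuous.measurable e)
    (fun p => gaussianSmoothing_nonneg h.nonneg e p.1 p.2)
    (fun p => gaussianSmoothing_le hL hB e p.1 p.2)
    (integrable_prod_gaussianSmoothing (measurable_dirDeriv e _)
      h.integrable_dirDeriv_dirDeriv e ν) hδ

lemma integral_prod_fisherDensity (h : RegularAlong e f μ) (hδ : 0 < δ) (hr : 0 ≤ r)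
    (hf : Integrable (fun x => shiftedNegMulLog δ (f x)) μ)
    (hfr : Integrable (fun x => shiftedNegMulLog δ (gaussianSmoothing e r f x)) μ) :
    ∫ p, fisherDensity e δ (gaussianSmoothing e p.1 f) p.2
        ∂(volume.restrict (Set.Ioo 0 r)).prod μ =
      2 * (∫ x, shiftedNegMulLog δ (gaussianSmoothing e r f x) ∂μ -
        ∫ x, shiftedNegMulLog δ (f x) ∂μ) := by
  have hint := h.integrable_prod_mul_dirDeriv_dirDeriv hδ (volume.restrict (Set.Ioo 0 r))
  calc _ = ∫ y in Set.Ioo 0 r, ∫ x, fisherDensity e δ (gaussianSmoothing e y f) x ∂μ :=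
        integral_prod _ (h.integrable_prod_fisherDensity hδ _)
    _ = ∫ y in Set.Ioo 0 r, ∫ x, (-log (gaussianSmoothing e y f x + δ) - 1) *
          dirDeriv e (dirDeriv e (gaussianSmoothing e y f)) x ∂μ := by
        simp only [(h.smoothing _).integral_mul_dirDeriv_dirDeriv hδ]
    _ = ∫ x, (∫ y in Set.Ioo 0 r, (-log (gaussianSmoothing e y f x + δ) - 1) *
          dirDeriv e (dirDeriv e (gaussianSmoothing e y f)) x) ∂μ := integral_integral_swap hint
    _ = ∫ x, 2 * (shiftedNegMulLog δ (gaussianSmoothing e r f x) -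
          shiftedNegMulLog δ (f x)) ∂μ := by
        refine integral_congr_ae ?_
        filter_upwards [hint.prod_left_ae] with x hx
        exact h.setIntegral_mul_dirDeriv_dirDeriv_smoothing hδ hr hx
    _ = _ := by rw [integral_const_mul, integral_sub hfr hf]

lemma tendsto_integral_prod_fisherDensity (h : RegularAlong e f μ) (hr : 0 ≤ r)
    (hf : Integrable (fun x => √(f x)) μ)
    (hfr : Integrable (fun x => √(gaussianSmoothing e r f x)) μ) {δ : ℕ → ℝ}
    (hδ : ∀ n, 0 < δ n) (hδ1 : ∀ n, δ n ≤ 1) (hlim : Tendsto δ atTop (𝓝 0)) :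
    Tendsto (fun n => ∫ p, fisherDensity e (δ n) (gaussianSmoothing e p.1 f) p.2
        ∂(volume.restrict (Set.Ioo 0 r)).prod μ) atTop
      (𝓝 (2 * (∫ x, negMulLog (gaussianSmoothing e r f x) ∂μ - ∫ x, negMulLog (f x) ∂μ))) := by
  have hfm := h.differentiable.continuous.measurable
  have hrm := (h.smoothing r).differentiable.continuous.measurable
  obtain ⟨B, hB⟩ := h.bddAbove
  obtain ⟨B', hB'⟩ := (h.smoothing r).bddAbove
  have hr0 := (h.smoothing r).nonneg
  refine (((tendsto_integral_shiftedNegMulLog_comp hrm hr0 hB' hfr hδ hδ1 hlim).sub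
    (tendsto_integral_shiftedNegMulLog_comp hfm h.nonneg hB hf hδ hδ1 hlim)).const_mul 2).congr
    fun n => (h.integral_prod_fisherDensity (hδ n) hr ?_ ?_).symm
  · exact integrable_shiftedNegMulLog_comp hfm h.nonneg hB hf (hδ n) (hδ1 n)
  · exact integrable_shiftedNegMulLog_comp hrm hr0 hB' hfr (hδ n) (hδ1 n)

theorem integrable_and_integral_prod_fisherDensity_zero (h : RegularAlong e f μ) (hr : 0 ≤ r)
    (hf : Integrable (fun x => √(f x)) μ)
    (hfr : Integrable (fun x => √(gaussianSmoothing e r f x)) μ) :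
    Integrable (fun p : ℝ × E => fisherDensity e 0 (gaussianSmoothing e p.1 f) p.2)
        ((volume.restrict (Set.Ioo 0 r)).prod μ) ∧
      ∫ p, fisherDensity e 0 (gaussianSmoothing e p.1 f) p.2
          ∂(volume.restrict (Set.Ioo 0 r)).prod μ =
        2 * (∫ x, negMulLog (gaussianSmoothing e r f x) ∂μ - ∫ x, negMulLog (f x) ∂μ) := by
  let δ (n : ℕ) : ℝ := 1 / ((n : ℝ) + 1)
  have hδ (n : ℕ) : 0 < δ n := Nat.one_div_pos_of_nat
  have hδanti : Antitone δ := fun _ _ h => Nat.one_div_le_one_div h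
  have hδ1 (n : ℕ) : δ n ≤ 1 := (hδanti n.zero_le).trans_eq (by simp [δ])
  have hlim : Tendsto δ atTop (𝓝 0) := tendsto_one_div_add_atTop_nhds_zero_nat
  have hu (y : ℝ) := (h.smoothing y).nonneg
  have hint (n : ℕ) := h.integrable_prod_fisherDensity (hδ n) (volume.restrict (Set.Ioo 0 r))
  have hpointwise (p : ℝ × E) := tendsto_fisherDensity (hu p.1) hlim e p.2
  have hintegral := h.tendsto_integral_prod_fisherDensity hr hf hfr hδ hδ1 hlim
  have hF := integrable_of_tendsto_of_tendsto_integral hint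
    (fun n p => fisherDensity_nonneg (hu p.1) (hδ n).le e p.2) hpointwise hintegral
  refine ⟨hF, tendsto_nhds_unique (integral_tendsto_of_tendsto_of_monotone hint hF
    (ae_of_all _ fun p m n hmn => ?_) (ae_of_all _ hpointwise)) hintegral⟩
  exact fisherDensity_anti (hu p.1) (hδ n) (hδanti hmn) e p.2

theorem half_integral_sq_integral_abs_dirDeriv_le (h : RegularAlong e f μ) (hr : 0 ≤ r)
    (hf : Integrable (fun x => √(f x)) μ)
    (hfr : Integrable (fun x => √(gaussianSmoothing e r f x)) μ) :
    1 / 2 * ∫ y in Set.Ioo 0 r, (∫ x, |dirDeriv e (gaussianSmoothing e y f) x| ∂μ) ^ 2 ≤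
      (∫ x, f x ∂μ) *
        (∫ x, negMulLog (gaussianSmoothing e r f x) ∂μ - ∫ x, negMulLog (f x) ∂μ) := by
  obtain ⟨hF, hdeBruijn⟩ := h.integrable_and_integral_prod_fisherDensity_zero hr hf hfr
  have hcauchySchwarz : ∀ᵐ y ∂volume.restrict (Set.Ioo 0 r),
      (∫ x, |dirDeriv e (gaussianSmoothing e y f) x| ∂μ) ^ 2 ≤
        (∫ x, f x ∂μ) * ∫ x, fisherDensity e 0 (gaussianSmoothing e y f) x ∂μ := by
    filter_upwards [hF.prod_right_ae] with y hy
    have hu := h.smoothing y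
    simp only [fisherDensity, add_zero] at hy ⊢
    rw [← integral_gaussianSmoothing h.integrable e y]
    exact sq_integral_abs_le_integral_mul_integral_sq_div hu.nonneg
      (fun x hx => dirDeriv_eq_zero_of_nonneg hu.nonneg hx e) hu.integrable
      hu.integrable_dirDeriv hy
  have hmono := integral_mono_of_nonneg (ae_of_all _ fun y => sq_nonneg _)
    (hF.integral_prod_left.const_mul (∫ x, f x ∂μ)) hcauchySchwarz
  rw [integral_const_mul, ← integral_prod _ hF, hdeBruijn] at hmono
  linarith

end RegularAlong

end DeBruijn

section GaussianDecay

lemma neg_mul_sq_norm_sub_le {E : Type*} [SeminormedAddCommGroup E] {c ε : ℝ} (hc : 0 ≤ c)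
    (hcε : 2 * c ≤ ε) (x v : E) :
    -ε * ‖x - v‖ ^ 2 ≤ -c * ‖x‖ ^ 2 + 2 * c * ‖v‖ ^ 2 := by
  have hx : ‖x‖ ^ 2 ≤ 2 * (‖x - v‖ ^ 2 + ‖v‖ ^ 2) :=
    (pow_le_pow_left₀ (norm_nonneg x) (norm_le_norm_sub_add x v) 2).trans add_sq_le
  have := mul_le_mul_of_nonneg_left hx hc
  have := mul_le_mul_of_nonneg_right hcε (sq_nonneg ‖x - v‖)
  linarith

lemma exists_gaussianSmoothing_le_exp_neg_mul_sq_norm {E : Type*} [NormedAddCommGroup E]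
    [NormedSpace ℝ E] {f : E → ℝ} {C ε : ℝ} (hf : ∀ x, 0 ≤ f x) (hε : 0 < ε)
    (hdecay : ∀ x, f x ≤ C * exp (-ε * ‖x‖ ^ 2)) (e : E) (y : ℝ) :
    ∃ K c, 0 < c ∧ ∀ x, gaussianSmoothing e y f x ≤ K * exp (-c * ‖x‖ ^ 2) := by
  obtain ⟨b, hb, hexp⟩ := IsGaussian.exists_integrable_exp_sq (gaussianReal 0 1)
  have hC : 0 ≤ C := by simpa using (hf 0).trans (hdecay 0)
  set a := √y * ‖e‖
  set c := min ε (b / (a ^ 2 + 1)) / 2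
  have hc : 0 < c := by positivity
  have hcε : 2 * c ≤ ε := (mul_div_cancel₀ _ two_ne_zero).trans_le (min_le_left _ _)
  have hca : 2 * c * a ^ 2 ≤ b := by
    have : 2 * c ≤ b / (a ^ 2 + 1) :=
      (mul_div_cancel₀ _ two_ne_zero).trans_le (min_le_right _ _)
    rw [le_div_iff₀ (by positivity)] at this
    linarith
  have hpointwise (x : E) (z : ℝ) :
      f (x - (√y * z) • e) ≤ C * exp (-c * ‖x‖ ^ 2) * exp (b * ‖z‖ ^ 2) := by
    set v := (√y * z) • e
    have hv : ‖v‖ ^ 2 = a ^ 2 * ‖z‖ ^ 2 := by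
      simp only [v, a, norm_smul, norm_mul, norm_of_nonneg (sqrt_nonneg y)]
      ring
    have hexponent : -ε * ‖x - v‖ ^ 2 ≤ -c * ‖x‖ ^ 2 + b * ‖z‖ ^ 2 := by
      have hshift := neg_mul_sq_norm_sub_le hc.le hcε x v
      have hb' := mul_le_mul_of_nonneg_right hca (sq_nonneg ‖z‖)
      rw [hv] at hshift
      linarith
    calc f (x - v) ≤ C * exp (-ε * ‖x - v‖ ^ 2) := hdecay _
      _ ≤ C * exp (-c * ‖x‖ ^ 2 + b * ‖z‖ ^ 2) := by gcongr
      _ = C * exp (-c * ‖x‖ ^ 2) * exp (b * ‖z‖ ^ 2) := by rw [exp_add, mul_assoc]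
  refine ⟨C * ∫ z, exp (b * ‖z‖ ^ 2) ∂gaussianReal 0 1, c, hc, fun x => ?_⟩
  have := integral_mono_of_nonneg (ae_of_all _ fun z => hf _) (hexp.const_mul _)
    (ae_of_all _ (hpointwise x))
  rwa [integral_const_mul, mul_right_comm] at this

variable {E : Type*} [NormedAddCommGroup E] [InnerProductSpace ℝ E] [FiniteDimensional ℝ E]
  [MeasurableSpace E] [BorelSpace E] {f : E → ℝ} {C ε : ℝ}

lemma integrable_exp_neg_mul_sq_norm (hε : 0 < ε) :
    Integrable fun x : E => exp (-ε * ‖x‖ ^ 2) :=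
  .of_integral_ne_zero (by rw [GaussianFourier.integral_rexp_neg_mul_sq_norm hε]; positivity)

lemma integrable_of_le_exp_neg_mul_sq_norm (hfm : Measurable f) (hf : ∀ x, 0 ≤ f x) (hε : 0 < ε)
    (hdecay : ∀ x, f x ≤ C * exp (-ε * ‖x‖ ^ 2)) : Integrable f :=
  ((integrable_exp_neg_mul_sq_norm hε).const_mul C).mono' hfm.aestronglyMeasurable
    (ae_of_all _ fun x => (norm_of_nonneg (hf x)).trans_le (hdecay x))

lemma integrable_sqrt_of_le_exp_neg_mul_sq_norm (hfm : Measurable f) (hε : 0 < ε)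
    (hdecay : ∀ x, f x ≤ C * exp (-ε * ‖x‖ ^ 2)) : Integrable fun x => √(f x) := by
  refine integrable_of_le_exp_neg_mul_sq_norm hfm.sqrt (fun x => sqrt_nonneg _) (half_pos hε)
    (C := √C) fun x => (sqrt_le_sqrt (hdecay x)).trans_eq ?_
  rw [sqrt_mul' _ (exp_nonneg _), sqrt_eq_rpow (exp _), ← exp_mul]
  ring_nf

end GaussianDecay

lemma densConv1_eq_gaussianSmoothing {d : ℕ} (f : EuclideanSpace ℝ (Fin d) → ℝ)
    (e : EuclideanSpace ℝ (Fin d)) {y : ℝ} (hy : 0 < y) :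
    densConv1 f e y = gaussianSmoothing e y f := by
  ext x
  have hmap : (gaussianReal 0 1).map (√y * ·) = gaussianReal 0 y.toNNReal := by
    rw [gaussianReal_map_const_mul, mul_zero, mul_one]
    congr 1
    exact NNReal.eq (by simp [hy.le])
  have hpdf (s : ℝ) : (2 * π * y) ^ (-(1 : ℝ) / 2) * exp (-s ^ 2 / (2 * y)) =
      gaussianPDFReal 0 y.toNNReal s := by
    rw [gaussianPDFReal, coe_toNNReal y hy.le, sub_zero, neg_div, rpow_neg (by positivity),
      ← sqrt_eq_rpow]
  rw [gaussianSmoothing, densConv1,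
    ← (measurableEmbedding_mulLeft₀ (sqrt_pos.2 hy).ne').integral_map (fun s => f (x - s • e)),
    hmap, integral_gaussianReal_eq_integral_smul (toNNReal_pos.2 hy).ne']
  simp only [hpdf, smul_eq_mul, mul_comm (f _)]

theorem statement12_general {E : Type*} [NormedAddCommGroup E] [InnerProductSpace ℝ E]
    [FiniteDimensional ℝ E] [MeasurableSpace E] [BorelSpace E] {e : E} {f : E → ℝ} {C ε r : ℝ}
    {L M : ℝ≥0} (hf : ∀ x, 0 ≤ f x) (hε : 0 < ε) (hdecay : ∀ x, f x ≤ C * exp (-ε * ‖x‖ ^ 2))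
    (hdiff : Differentiable ℝ f) (hlip : LipschitzWith L f)
    (hdiff' : Differentiable ℝ (dirDeriv e f)) (hlip' : LipschitzWith M (dirDeriv e f))
    (hsecond : Integrable (dirDeriv e (dirDeriv e f))) (hr : 0 ≤ r) :
    1 / 2 * ∫ y in Set.Ioo 0 r, (∫ x, |dirDeriv e (gaussianSmoothing e y f) x|) ^ 2 ≤
      (∫ x, f x) * ((∫ x, negMulLog (gaussianSmoothing e r f x)) - ∫ x, negMulLog (f x)) := by
  have hfm : Measurable f := hdiff.continuous.measurable
  have hC : 0 ≤ C := by simpa using (hf 0).trans (hdecay 0)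
  have hregular : RegularAlong e f volume := {
    nonneg := hf
    bddAbove := ⟨C, fun x => (hdecay x).trans
      (mul_le_of_le_one_right hC (exp_le_one_iff.2 (by nlinarith [sq_nonneg ‖x‖])))⟩
    differentiable := hdiff
    lipschitz := ⟨L, hlip⟩
    differentiable_dirDeriv := hdiff'
    lipschitz_dirDeriv := ⟨M, hlip'⟩
    integrable := integrable_of_le_exp_neg_mul_sq_norm hfm hf hε hdecay
    integrable_dirDeriv_dirDeriv := hsecond }
  obtain ⟨K, c, hc, hdecay'⟩ := exists_gaussianSmoothing_le_exp_neg_mul_sq_norm hf hε hdecay e r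
  exact hregular.half_integral_sq_integral_abs_dirDeriv_le hr
    (integrable_sqrt_of_le_exp_neg_mul_sq_norm hfm hε hdecay)
    (integrable_sqrt_of_le_exp_neg_mul_sq_norm
      (hregular.smoothing r).differentiable.continuous.measurable hc hdecay')

end

theorem statement12 {d : ℕ} (hd : 0 < d) (r₁ : ℝ) (hr₁ : 0 < r₁)
    (f : EuclideanSpace ℝ (Fin d) → ℝ)
    (e₁ : EuclideanSpace ℝ (Fin d)) (he₁ : e₁ = EuclideanSpace.single ⟨0, hd⟩ 1)
    (hfm : Measurable f) (hf0 : ∀ x, 0 ≤ f x) (hfi : Integrable f) (hf1 : ∫ x, f x = 1)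
    (C ε : ℝ) (hC : 0 < C) (hε : 0 < ε)
    (hdecay : ∀ x, f x ≤ C * Real.exp (-ε * ‖x‖ ^ 2))
    (hdiff : Differentiable ℝ f) (hdiff2 : Differentiable ℝ (fderiv ℝ f))
    (hfbdd : ∃ B, ∀ x, |f x| ≤ B) (hflip : ∃ L : NNReal, LipschitzWith L f)
    (hpbdd : ∃ B, ∀ x, |fderiv ℝ f x e₁| ≤ B)
    (hplip : ∃ L : NNReal, LipschitzWith L fun x => fderiv ℝ f x e₁)
    (hsecond : Integrable fun x =>
      sSup ((fun z => |fderiv ℝ (fun w => fderiv ℝ f w e₁) z e₁|) '' Metric.closedBall x 1)) :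
    1 / 2 * ∫ y in Set.Ioo 0 (r₁ ^ 2),
        (∫ x, |fderiv ℝ (densConv1 f e₁ y) x e₁|) ^ 2 ≤
      (∫ x, Real.negMulLog (densConv1 f e₁ (r₁ ^ 2) x)) - ∫ x, Real.negMulLog (f x) := by
  obtain ⟨L, hL⟩ := hflip
  obtain ⟨M, hM⟩ := hplip
  have hdiff' : Differentiable ℝ (dirDeriv e₁ f) := hdiff2.clm_apply (differentiable_const e₁)
  have hsecond' : Integrable (dirDeriv e₁ (dirDeriv e₁ f)) :=
    integrable_of_integrable_sSup_abs_closedBall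
      (measurable_dirDeriv e₁ (dirDeriv e₁ f)).aestronglyMeasurable (abs_dirDeriv_le hM e₁)
      zero_le_one hsecond
  have hmain := statement12_general hf0 hε hdecay hdiff hL hdiff' hM hsecond' (sq_nonneg r₁)
  rw [hf1, one_mul] at hmain
  rw [densConv1_eq_gaussianSmoothing f e₁ (by positivity)]
  refine hmain.trans_eq' (congrArg _ (setIntegral_congr_fun measurableSet_Ioo fun y hy => ?_))
  simp only [densConv1_eq_gaussianSmoothing f e₁ hy.1, dirDeriv]
end
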